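/- arXiv:1612.08028 — 2 statements merged into one kernel-verified Lean document; each statement's English description precedes it below -/
import Mathlib

section
/- Let Λ ⊆ ℤⁿ be a lattice (finite-index subgroup) of determinant m, let M_Λ denote the sup norm of a shortest non-zero vector of Λ, and for B > 0 let N_Λ(B) = #{x ∈ Λ : ‖x‖_∞ ≤ B}. Then N_Λ(B) ≪_n Bⁿ/m + B^{n−1}/M_Λ^{n−1} + 1. -/
open MvPolynomial Filter Pointwise

noncomputable section

/-- The linear form with coefficient vector `c`. -/
def linForm {R : Type*} [CommRing R] {n : ℕ} (c : Fin n → R) : MvPolynomial (Fin n) R :=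
  ∑ i, C (c i) * X i

/-- `ρ_F(m)`: the number of zeros of `F` in `(ℤ/mℤ)ⁿ`. -/
def rhoF {n : ℕ} (F : MvPolynomial (Fin n) ℤ) (m : ℕ) : ℕ :=
  Nat.card {a : Fin n → ZMod m // MvPolynomial.eval a (F.map (Int.castRingHom (ZMod m))) = 0}

/-- The discriminant `Δ(F) = ∏_{i₁<⋯<iₙ} |det(L_{i₁},…,L_{iₙ})|`, the product being over
all `n`-element subsets of the linear factors (parametrized by strictly monotone maps). -/
def discProd {n d : ℕ} (L : Fin d → Fin n → ℂ) : ℝ :=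
  ∏ᶠ g ∈ {g : Fin n → Fin d | StrictMono g},
    ‖Matrix.det (Matrix.of fun i j => L (g i) j)‖

/-- `F` is a decomposable form with linear factors `L₁,…,L_d` having
algebraic-integer coefficients. -/
def IsDecomp {n d : ℕ} (F : MvPolynomial (Fin n) ℤ) (L : Fin d → Fin n → ℂ) : Prop :=
  (∀ j i, IsIntegral ℤ (L j i)) ∧ F.map (Int.castRingHom ℂ) = ∏ j, linForm (L j)

/-- An integer is `k`-free if it is divisible by no `k`-th power of a prime. -/
def KFree (k : ℕ) (N : ℤ) : Prop := ∀ p : ℕ, p.Prime → ¬ ((p : ℤ) ^ k ∣ N)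

/-- `N_{F,k}(B)`. -/
def NFk {n : ℕ} (F : MvPolynomial (Fin n) ℤ) (k : ℕ) (B : ℝ) : ℕ :=
  Set.ncard {x : Fin n → ℤ | (∀ i, |(x i : ℝ)| ≤ B) ∧ KFree k (MvPolynomial.eval x F)}

def log1 (x : ℝ) : ℝ := max 1 (Real.log x)
def log2 (x : ℝ) : ℝ := log1 (log1 x)
def log3 (x : ℝ) : ℝ := log1 (log2 x)

/-- `ξ₁` is eventually increasing, tends to infinity and is `O(log₂ B / log₃ B)`. -/
def Xi1Good (ξ₁ : ℝ → ℝ) : Prop :=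
  (∃ B₀ : ℝ, ∀ ⦃B B' : ℝ⦄, B₀ ≤ B → B ≤ B' → ξ₁ B ≤ ξ₁ B') ∧
  Tendsto ξ₁ atTop atTop ∧ (ξ₁ =O[atTop] fun B => log2 B / log3 B)

def xi2 (n : ℕ) (B : ℝ) : ℝ := B ^ n * Real.log B ^ ((2 : ℝ) / 3)

def xi3 (C₁ : ℝ) (k : ℕ) (B : ℝ) : ℝ := C₁ * B ^ 2 * Real.log B ^ (-(2 * (k : ℝ)) / 3)

/-- `C(ξ₁) = ∏_{p ≤ ξ₁} p^{k-1}`. -/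
def Cxi (k : ℕ) (ξ : ℝ) : ℕ := ∏ᶠ p ∈ {p : ℕ | p.Prime ∧ (p : ℝ) ≤ ξ}, p ^ (k - 1)

/-- `𝒟(u₂) = ∏ p` over primes `ξ₁ < p ≤ (1/12)log(B²/u₂)`, `p ∤ u₂`, `p ≡ 1 (mod k)`. -/
def scrD (k : ℕ) (ξ₁ B : ℝ) (u₂ : ℕ) : ℕ :=
  ∏ᶠ p ∈ {p : ℕ | p.Prime ∧ ξ₁ < (p : ℝ) ∧ (p : ℝ) ≤ Real.log (B ^ 2 / (u₂ : ℝ)) / 12 ∧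
      ¬ p ∣ u₂ ∧ p % k = 1}, p

/-- The set `𝒮_p ⊆ 𝔽_pⁿ` attached to a factorization `F = F*·∏𝓛ᵢ` over `ℤ_p`. -/
def Sp {n : ℕ} (p : ℕ) (hp : p.Prime) {τ : ℕ}
    (𝓛 : Fin τ → Fin n → @PadicInt p ⟨hp⟩)
    (Fstar : MvPolynomial (Fin n) (@PadicInt p ⟨hp⟩)) (x : Fin n → ZMod p) : Prop :=
  (∃ i j : Fin τ, i < j ∧ (∑ m, (@PadicInt.toZMod p ⟨hp⟩) (𝓛 i m) * x m) = 0 ∧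
      (∑ m, (@PadicInt.toZMod p ⟨hp⟩) (𝓛 j m) * x m) = 0) ∨
  MvPolynomial.eval x (Fstar.map (@PadicInt.toZMod p ⟨hp⟩)) = 0

/-- The data `(𝓛ᵢ, F*)` is a factorization of `F` over `ℤ_p` with `F*` having no
linear factor over `ℚ_p`. -/
def IsPadicFact {n : ℕ} (F : MvPolynomial (Fin n) ℤ) (p : ℕ) (hp : p.Prime) {τ : ℕ}
    (𝓛 : Fin τ → Fin n → @PadicInt p ⟨hp⟩)
    (Fstar : MvPolynomial (Fin n) (@PadicInt p ⟨hp⟩)) : Prop :=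
  F.map (Int.castRingHom (@PadicInt p ⟨hp⟩)) = Fstar * ∏ i, linForm (𝓛 i) ∧
  ∀ c : Fin n → @Padic p ⟨hp⟩, (∃ i, c i ≠ 0) →
    ¬ (linForm c ∣ Fstar.map (@PadicInt.Coe.ringHom p ⟨hp⟩))


-- τ_F(p) intrinsically: number of linear factors of F mod p up to scaling
def tauFp {n : ℕ} (F : MvPolynomial (Fin n) ℤ) (p : ℕ) : ℕ :=
  Nat.card {c : Fin n → ZMod p //
    (∃ i, c i = 1 ∧ ∀ j, j < i → c j = 0) ∧
    linForm c ∣ F.map (Int.castRingHom (ZMod p))}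

def tauF {n : ℕ} (F : MvPolynomial (Fin n) ℤ) (m : ℕ) : ℕ :=
  ∏ p ∈ m.primeFactors, tauFp F p

def sigmaPow (α : ℝ) (m : ℕ) : ℝ := ∑ s ∈ m.divisors, (s : ℝ) ^ α

-- sup norm / lattice minimum / lattice point count
def supNorm {n : ℕ} (x : Fin n → ℤ) : ℕ := Finset.univ.sup fun i => (x i).natAbs

def latMin {n : ℕ} (Λ : AddSubgroup (Fin n → ℤ)) : ℕ :=
  sInf {m : ℕ | ∃ x ∈ Λ, x ≠ 0 ∧ supNorm x = m}

def NLat {n : ℕ} (Λ : AddSubgroup (Fin n → ℤ)) (B : ℝ) : ℕ :=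
  Set.ncard {x : Fin n → ℤ | x ∈ Λ ∧ ∀ i, |(x i : ℝ)| ≤ B}

-- the H_{u₁,u₂}(B) count
def Hcount {n : ℕ} (F : MvPolynomial (Fin n) ℤ)
    {τ : ∀ p : ℕ, p.Prime → ℕ}
    (𝓛 : ∀ (p : ℕ) (hp : p.Prime), Fin (τ p hp) → Fin n → @PadicInt p ⟨hp⟩)
    (Fstar : ∀ (p : ℕ) (hp : p.Prime), MvPolynomial (Fin n) (@PadicInt p ⟨hp⟩))
    (k u₁ u₂ D : ℕ) (B : ℝ) : ℕ :=
  Set.ncard {m : Fin n → ℤ | (∀ i, |(m i : ℝ)| ≤ B) ∧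
    (u₁ : ℤ) ∣ MvPolynomial.eval m F ∧ (u₂ : ℤ) ∣ MvPolynomial.eval m F ∧
    (∃ s : ℕ, s < D ∧ (D : ℤ) ∣ (MvPolynomial.eval m F - (u₁ : ℤ) * u₂ * (s : ℤ) ^ k)) ∧
    ∀ (p : ℕ) (hp : p.Prime), p ∣ u₁ * u₂ →
      ¬ Sp p hp (𝓛 p hp) (Fstar p hp) (fun i => ((m i : ZMod p)))}

-- N₃(B)
def N3count {n : ℕ} (F : MvPolynomial (Fin n) ℤ) (k : ℕ) (ξ₁ ξ₂ B : ℝ) : ℕ :=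
  Set.ncard {x : Fin n → ℤ | (∀ i, |(x i : ℝ)| ≤ B) ∧
    (∃ p : ℕ, p.Prime ∧ ξ₂ < (p : ℝ) ∧ (p : ℤ) ^ k ∣ MvPolynomial.eval x F) ∧
    (∀ p : ℕ, p.Prime → ξ₁ < (p : ℝ) → (p : ℝ) ≤ ξ₂ → ¬ ((p : ℤ) ^ 2 ∣ MvPolynomial.eval x F)) ∧
    (∀ p : ℕ, p.Prime → (p : ℤ) ^ k ∣ MvPolynomial.eval x F → ξ₁ < (p : ℝ))}

-- N₃*(B)
def N3starCount {n : ℕ}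
    {τ : ∀ p : ℕ, p.Prime → ℕ}
    (𝓛 : ∀ (p : ℕ) (hp : p.Prime), Fin (τ p hp) → Fin n → @PadicInt p ⟨hp⟩)
    (Fstar : ∀ (p : ℕ) (hp : p.Prime), MvPolynomial (Fin n) (@PadicInt p ⟨hp⟩))
    (ξ₁ B : ℝ) : ℕ :=
  Set.ncard {x : Fin n → ℤ | (∀ i, |(x i : ℝ)| ≤ B) ∧
    ∃ (p : ℕ) (hp : p.Prime), ξ₁ < (p : ℝ) ∧
      Sp p hp (𝓛 p hp) (Fstar p hp) (fun i => ((x i : ZMod p)))}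

-- N₃†(B)
def N3dag {n : ℕ} (F : MvPolynomial (Fin n) ℤ)
    {τ : ∀ p : ℕ, p.Prime → ℕ}
    (𝓛 : ∀ (p : ℕ) (hp : p.Prime), Fin (τ p hp) → Fin n → @PadicInt p ⟨hp⟩)
    (Fstar : ∀ (p : ℕ) (hp : p.Prime), MvPolynomial (Fin n) (@PadicInt p ⟨hp⟩))
    (k : ℕ) (ξ₁ ξ₂ B : ℝ) : ℕ :=
  Set.ncard {x : Fin n → ℤ | (∀ i, |(x i : ℝ)| ≤ B) ∧
    ∃ (u : ℤ) (q : ℕ), q.Prime ∧ ξ₂ < (q : ℝ) ∧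
      MvPolynomial.eval x F = u * (q : ℤ) ^ k ∧
      (∀ p : ℕ, p.Prime → (p : ℝ) ≤ ξ₁ → ¬ ((p : ℤ) ^ k ∣ u)) ∧
      (∀ p : ℕ, p.Prime → ξ₁ < (p : ℝ) → (p : ℝ) ≤ ξ₂ → ¬ ((p : ℤ) ^ 2 ∣ u)) ∧
      (∀ (p : ℕ) (hp : p.Prime), (p : ℤ) ∣ u →
        ¬ Sp p hp (𝓛 p hp) (Fstar p hp) (fun i => ((x i : ZMod p))))}

-- ℛ_l : congruence classes mod l = u₁u₂D
def Rset {n : ℕ} (F : MvPolynomial (Fin n) ℤ)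
    {τ : ∀ p : ℕ, p.Prime → ℕ}
    (𝓛 : ∀ (p : ℕ) (hp : p.Prime), Fin (τ p hp) → Fin n → @PadicInt p ⟨hp⟩)
    (Fstar : ∀ (p : ℕ) (hp : p.Prime), MvPolynomial (Fin n) (@PadicInt p ⟨hp⟩))
    (k u₁ u₂ D : ℕ) : Set (Fin n → ZMod (u₁ * u₂ * D)) :=
  {m | ∃ a : Fin n → ℤ, (∀ i, ((a i : ZMod (u₁ * u₂ * D))) = m i) ∧
    (u₁ : ℤ) ∣ MvPolynomial.eval a F ∧ (u₂ : ℤ) ∣ MvPolynomial.eval a F ∧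
    (∃ s : ℕ, s < D ∧ (D : ℤ) ∣ (MvPolynomial.eval a F - (u₁ : ℤ) * u₂ * (s : ℤ) ^ k)) ∧
    ∀ (p : ℕ) (hp : p.Prime), p ∣ u₁ * u₂ →
      ¬ Sp p hp (𝓛 p hp) (Fstar p hp) (fun i => ((a i : ZMod p)))}

-- exponential sum E_ℛ(t; l)
def Esum {n l : ℕ} (R : Set (Fin n → ZMod l)) (t : Fin n → ℤ) : ℂ :=
  ∑ᶠ a ∈ R, Complex.exp (-(2 * Real.pi * Complex.I) *
    (∑ i, ((a i).val : ℂ) * (t i : ℂ)) / (l : ℂ))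

def Mplus {n : ℕ} (l : ℕ) (R : Set (Fin n → ZMod l)) (B : ℝ) : ℝ :=
  (3 * B) ^ n * R.ncard / (l : ℝ) ^ n

def Mpp {n : ℕ} (l : ℕ) (R : Set (Fin n → ZMod l)) (B : ℝ) : ℝ :=
  B ^ n / (l : ℝ) ^ n *
    ∑ᶠ t ∈ {t : Fin n → ℤ | t ≠ 0 ∧ ∀ i, |(t i : ℝ)| ≤ (l : ℝ) / B},
      ‖Esum R t‖

-- S(t; p)
def Ssum {n : ℕ} (p : ℕ) (hp : p.Prime) {τ : ℕ}
    (𝓛 : Fin τ → Fin n → @PadicInt p ⟨hp⟩) (t : Fin n → ℤ) : ℂ :=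
  ∑ i : Fin τ,
    ∑ᶠ a ∈ {a : Fin n → ZMod p | (∑ m, (@PadicInt.toZMod p ⟨hp⟩) (𝓛 i m) * a m) = 0},
      Complex.exp ((2 * Real.pi * Complex.I) *
        (∑ m, ((a m).val : ℂ) * (t m : ℂ)) / (p : ℂ))

-- |S(t; l)| for squarefree l
def SabsSF {n : ℕ} {τ : ∀ p : ℕ, p.Prime → ℕ}
    (𝓛 : ∀ (p : ℕ) (hp : p.Prime), Fin (τ p hp) → Fin n → @PadicInt p ⟨hp⟩)
    (l : ℕ) (t : Fin n → ℤ) : ℝ :=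
  ∏ p ∈ l.primeFactors.attach,
    ‖Ssum p.1 (Nat.prime_of_mem_primeFactors p.2)
      (𝓛 p.1 (Nat.prime_of_mem_primeFactors p.2)) t‖

-- admissible u₂'s
def U2set (ξ₁ ξ₂ ξ₃ : ℝ) : Set ℕ :=
  {u | 0 < u ∧ (u : ℝ) ≤ ξ₃ ∧ Squarefree u ∧
    ∀ p ∈ u.primeFactors, ξ₁ < (p : ℝ) ∧ (p : ℝ) ≤ ξ₂}


-- extra defs for theorems

/-- `N₄(B)` from Lemma N4B. -/
def N4sum {n : ℕ} (F : MvPolynomial (Fin n) ℤ)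
    {τ : ∀ p : ℕ, p.Prime → ℕ}
    (𝓛 : ∀ (p : ℕ) (hp : p.Prime), Fin (τ p hp) → Fin n → @PadicInt p ⟨hp⟩)
    (Fstar : ∀ (p : ℕ) (hp : p.Prime), MvPolynomial (Fin n) (@PadicInt p ⟨hp⟩))
    (k : ℕ) (C₁ : ℝ) (ξ₁ : ℝ → ℝ) (B : ℝ) : ℝ :=
  ∑ᶠ u₁ ∈ {u₁ : ℕ | u₁ ∣ Cxi k (ξ₁ B)},
    ∑ᶠ u₂ ∈ U2set (ξ₁ B) (xi2 n B) (xi3 C₁ k B),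
      Mplus (u₁ * u₂ * scrD k (ξ₁ B) B u₂)
        (Rset F 𝓛 Fstar k u₁ u₂ (scrD k (ξ₁ B) B u₂)) B /
        (k : ℝ) ^ (scrD k (ξ₁ B) B u₂).primeFactors.card

/-- the inner truncated sum `Σ'_{|tᵢ|≤Y} |S(t;u₂)|`. -/
def Ssumbox {n : ℕ} {τ : ∀ p : ℕ, p.Prime → ℕ}
    (𝓛 : ∀ (p : ℕ) (hp : p.Prime), Fin (τ p hp) → Fin n → @PadicInt p ⟨hp⟩)
    (u₂ : ℕ) (Y : ℝ) : ℝ :=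
  ∑ᶠ t ∈ {t : Fin n → ℤ | t ≠ 0 ∧ ∀ i, |(t i : ℝ)| ≤ Y}, SabsSF 𝓛 u₂ t

/-- `Q` restricted to a set of `u₂`'s. -/
def QUgen {n : ℕ} {τ : ∀ p : ℕ, p.Prime → ℕ}
    (𝓛 : ∀ (p : ℕ) (hp : p.Prime), Fin (τ p hp) → Fin n → @PadicInt p ⟨hp⟩)
    (S : Set ℕ) (B : ℝ) : ℝ :=
  ∑ᶠ u₂ ∈ S, (1 / (u₂ : ℝ) ^ n) *
    Ssumbox 𝓛 u₂ ((u₂ : ℝ) ^ ((9 : ℝ) / 10) / B ^ ((4 : ℝ) / 5))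

/-- `l* = ∏_{p ≤ Ξ, p | u₂} p`. -/
def lstar (u₂ : ℕ) (Ξ : ℝ) : ℕ :=
  ∏ᶠ p ∈ {p : ℕ | p.Prime ∧ p ∣ u₂ ∧ (p : ℝ) ≤ Ξ}, p

theorem finite_intBox {n : ℕ} (R : ℝ) :
    {x : Fin n → ℤ | ∀ i, |(x i : ℝ)| ≤ R}.Finite := by
  refine (Fintype.piFinset fun _ : Fin n => Finset.Icc ⌈-R⌉ ⌊R⌋).finite_toSet.subset ?_
  intro x hx
  simp only [Finset.mem_coe, Fintype.mem_piFinset, Finset.mem_Icc]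
  exact fun i => ⟨Int.ceil_le.2 (abs_le.1 (hx i)).1, Int.le_floor.2 (abs_le.1 (hx i)).2⟩

theorem card_intervalBox_le {ι : Type*} [Fintype ι] [DecidableEq ι] {R : ℝ} (hR : 0 ≤ R) :
    ((Fintype.piFinset fun _ : ι => Finset.Icc ⌊-R⌋ ⌊R⌋).card : ℝ)
      ≤ (2 * R + 2) ^ Fintype.card ι := by
  rw [Fintype.card_piFinset, Finset.prod_const, Finset.card_univ, Int.card_Icc]
  push_cast
  gcongr
  have h1 := Int.floor_le R
  have h2 := Int.lt_floor_add_one (-R)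
  have h3 : ((⌊R⌋ + 1 - ⌊-R⌋ : ℤ) : ℝ) ≤ 2 * R + 2 := by push_cast; linarith
  have h4 : ⌊-R⌋ ≤ ⌊R⌋ := Int.floor_le_floor (by linarith)
  have h5 : ((⌊R⌋ + 1 - ⌊-R⌋).toNat : ℤ) = ⌊R⌋ + 1 - ⌊-R⌋ := Int.toNat_of_nonneg (by omega)
  rw [← h5] at h3
  exact_mod_cast h3

theorem card_le_of_separated_of_hyperplane {n : ℕ} {S : Finset (Fin n → ℤ)} {B M : ℝ}
    (hM : 0 < M) (hB : 0 ≤ B) (hS : ∀ x ∈ S, ∀ i, |(x i : ℝ)| ≤ B)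
    (hsep : ∀ x ∈ S, ∀ y ∈ S, (∀ i, |(x i : ℝ) - y i| < M) → x = y)
    {a : Fin n → ℝ} (ha : a ≠ 0) (h : ∀ x ∈ S, ∑ i, a i * (x i : ℝ) = 0) :
    (S.card : ℝ) ≤ (2 * (n * (B / M)) + 2) ^ (n - 1) := by
  classical
  obtain ⟨k, hk⟩ := Function.ne_iff.1 ha
  have hn : 0 < n := Fin.pos k
  have hn' : (0 : ℝ) < n := by exact_mod_cast hn
  obtain ⟨j, -, hj⟩ := Finset.exists_max_image Finset.univ (fun i => |a i|) ⟨k, Finset.mem_univ k⟩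
  have haj : 0 < |a j| := (abs_pos.2 hk).trans_le (hj k (Finset.mem_univ k))
  have hcard : Fintype.card {i : Fin n // i ≠ j} = n - 1 := by simp
  have hR : (0 : ℝ) ≤ n * (B / M) := by positivity
  rw [← hcard]
  refine le_trans ?_ (card_intervalBox_le hR)
  norm_cast
  refine Finset.card_le_card_of_injOn
    (fun x (i : {i : Fin n // i ≠ j}) => ⌊(n : ℝ) * ((x i : ℝ) / M)⌋) ?_ ?_
  · intro x hx
    simp only [Finset.mem_coe, Fintype.mem_piFinset, Finset.mem_Icc]
    intro i
    obtain ⟨h1, h2⟩ := abs_le.1 (hS x hx i)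
    constructor
    · apply Int.floor_le_floor
      rw [← mul_neg, ← neg_div]
      gcongr
    · apply Int.floor_le_floor
      gcongr
  · intro x hx y hy hxy
    have hoff : ∀ i, i ≠ j → |(x i : ℝ) - y i| < M / n := by
      intro i hi
      have h1 := Int.abs_sub_lt_one_of_floor_eq_floor (congrFun hxy ⟨i, hi⟩)
      rw [← mul_sub, ← sub_div, abs_mul, abs_div, abs_of_pos hM, abs_of_pos hn'] at h1
      rw [lt_div_iff₀ hn']
      rw [← mul_div_assoc, div_lt_one hM] at h1
      linarith
    have hzero : ∑ i, a i * ((x i : ℝ) - y i) = 0 := by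
      simp only [mul_sub, Finset.sum_sub_distrib, h x hx, h y hy, sub_zero]
    rw [← Finset.add_sum_erase _ _ (Finset.mem_univ j)] at hzero
    have hsum : |∑ i ∈ Finset.univ.erase j, a i * ((x i : ℝ) - y i)|
        ≤ ∑ i ∈ Finset.univ.erase j, |a j| * (M / n) := by
      refine (Finset.abs_sum_le_sum_abs _ _).trans (Finset.sum_le_sum fun i hi => ?_)
      rw [abs_mul]
      exact mul_le_mul (hj i (Finset.mem_univ i)) (hoff i (Finset.ne_of_mem_erase hi)).le
        (abs_nonneg _) (abs_nonneg _)
    rw [Finset.sum_const, Finset.card_erase_of_mem (Finset.mem_univ j), Finset.card_univ,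
      Fintype.card_fin, nsmul_eq_mul, Nat.cast_sub hn, ← abs_neg,
      ← eq_neg_of_add_eq_zero_left hzero, abs_mul] at hsum
    have hon : |(x j : ℝ) - y j| < M := by
      have h2 : |(x j : ℝ) - y j| ≤ (n - (1 : ℕ)) * (M / n) := by
        refine le_of_mul_le_mul_left ?_ haj
        linarith
      have h3 : (n - (1 : ℕ) : ℝ) * (M / n) = M - M / n := by
        push_cast; field_simp
      have : 0 < M / n := by positivity
      linarith
    refine hsep x hx y hy fun i => ?_
    by_cases hi : i = j
    · exact hi ▸ hon
    · refine (hoff i hi).trans_le (div_le_self hM.le ?_)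
      exact_mod_cast hn

/-- Rounding down coordinates with respect to a basis. -/
theorem exists_sub_mem_of_span_eq_top {n : ℕ} {Λ : AddSubgroup (Fin n → ℤ)} {B : ℝ}
    (hspan : Submodule.span ℝ ((fun (x : Fin n → ℤ) (i : Fin n) => (x i : ℝ)) ''
      {x | x ∈ Λ ∧ ∀ i, |(x i : ℝ)| ≤ B}) = ⊤) (z : Fin n → ℤ) :
    ∃ r : Fin n → ℤ, z - r ∈ Λ ∧ ∀ i, |(r i : ℝ)| ≤ n * B := by
  classical
  obtain ⟨b, hb, hbspan, hbli⟩ := exists_linearIndependent ℝ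
    ((fun (x : Fin n → ℤ) (i : Fin n) => (x i : ℝ)) '' {x | x ∈ Λ ∧ ∀ i, |(x i : ℝ)| ≤ B})
  let e : Module.Basis b ℝ (Fin n → ℝ) :=
    Module.Basis.mk hbli (by rw [Subtype.range_coe, hbspan, hspan])
  have : Fintype b := FiniteDimensional.fintypeBasisIndex e
  have hcard : Fintype.card b = n := by
    rw [← Module.finrank_eq_card_basis e, Module.finrank_fin_fun]
  choose v hv hvb using fun w : b => hb w.2
  have hz := e.sum_repr (fun i => (z i : ℝ))
  set c := e.repr (fun i => (z i : ℝ))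
  have hz' : ∀ i, ∑ w : b, c w * (v w i : ℝ) = z i := by
    intro i
    rw [← congrFun hz i, Finset.sum_apply]
    refine Finset.sum_congr rfl fun w _ => ?_
    rw [Pi.smul_apply, smul_eq_mul, Module.Basis.mk_apply, ← hvb w]
  refine ⟨z - ∑ w : b, ⌊c w⌋ • v w, ?_, fun i => ?_⟩
  · rw [sub_sub_cancel]
    exact sum_mem fun w _ => Λ.zsmul_mem (hv w).1 _
  · have : ((z - ∑ w : b, ⌊c w⌋ • v w) i : ℝ) = ∑ w : b, Int.fract (c w) * (v w i : ℝ) := by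
      simp only [Pi.sub_apply, Finset.sum_apply, Pi.smul_apply, smul_eq_mul, Int.cast_sub,
        Int.cast_sum, Int.cast_mul, ← hz' i, Int.fract, sub_mul, Finset.sum_sub_distrib]
    rw [this]
    refine (Finset.abs_sum_le_sum_abs _ _).trans ?_
    refine (Finset.sum_le_card_nsmul _ _ B fun w _ => ?_).trans_eq
      (by rw [Finset.card_univ, hcard, nsmul_eq_mul])
    rw [abs_mul, abs_of_nonneg (Int.fract_nonneg _)]
    exact (mul_le_of_le_one_left (abs_nonneg _) (Int.fract_lt_one _).le).trans ((hv w).2 i)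

theorem index_mul_ncard_le_of_span_eq_top {n : ℕ} {Λ : AddSubgroup (Fin n → ℤ)} {B : ℝ}
    (hB : 0 ≤ B)
    (hspan : Submodule.span ℝ ((fun (x : Fin n → ℤ) (i : Fin n) => (x i : ℝ)) ''
      {x | x ∈ Λ ∧ ∀ i, |(x i : ℝ)| ≤ B}) = ⊤) :
    ((Λ.index * {x | x ∈ Λ ∧ ∀ i, |(x i : ℝ)| ≤ B}.ncard : ℕ) : ℝ)
      ≤ (2 * ((n + 1) * B) + 2) ^ n := by
  classical
  choose r hr hrB using exists_sub_mem_of_span_eq_top hspan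
  have hinj : Set.InjOn (fun p : ((Fin n → ℤ) ⧸ Λ) × (Fin n → ℤ) => r p.1.out + p.2)
      (Set.univ ×ˢ {x | x ∈ Λ ∧ ∀ i, |(x i : ℝ)| ≤ B}) := by
    have key : ∀ (q : (Fin n → ℤ) ⧸ Λ) (x : Fin n → ℤ), x ∈ Λ →
        ((r q.out + x : Fin n → ℤ) : (Fin n → ℤ) ⧸ Λ) = q := by
      intro q x hx
      conv_rhs => rw [← QuotientAddGroup.out_eq' q]
      rw [eq_comm, ← sub_eq_zero, ← QuotientAddGroup.mk_sub, QuotientAddGroup.eq_zero_iff,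
        ← sub_sub]
      exact Λ.sub_mem (hr _) hx
    rintro ⟨q, x⟩ hx ⟨q', x'⟩ hx' heq
    have hq : q = q' := by
      rw [← key q x hx.2.1, ← key q' x' hx'.2.1]
      exact congrArg _ heq
    subst hq
    simpa using heq
  have hR : (0 : ℝ) ≤ (n + 1) * B := by positivity
  have hbox := card_intervalBox_le (ι := Fin n) hR
  rw [Fintype.card_fin] at hbox
  refine le_trans ?_ hbox
  rw [AddSubgroup.index, ← Set.ncard_univ, ← Set.ncard_prod, ← hinj.ncard_image, Nat.cast_le,
    ← Set.ncard_coe_finset]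
  refine Set.ncard_le_ncard ?_ (Finset.finite_toSet _)
  rintro _ ⟨⟨q, x⟩, ⟨-, -, hx⟩, rfl⟩
  simp only [Finset.mem_coe, Fintype.mem_piFinset, Finset.mem_Icc]
  intro i
  have h1 := abs_le.1 (hrB q.out i)
  have h2 := abs_le.1 (hx i)
  rw [Pi.add_apply]
  constructor
  · rw [← Int.cast_le (R := ℝ)]
    refine (Int.floor_le _).trans ?_
    push_cast
    linarith
  · rw [Int.le_floor]
    push_cast
    linarith

theorem exists_linear_relation_of_span_ne_top {n : ℕ} {S : Set (Fin n → ℝ)}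
    (hS : Submodule.span ℝ S ≠ ⊤) :
    ∃ a : Fin n → ℝ, a ≠ 0 ∧ ∀ x ∈ S, ∑ i, a i * x i = 0 := by
  obtain ⟨f, hf, hle⟩ := Submodule.exists_le_ker_of_lt_top _ (lt_top_iff_ne_top.2 hS)
  have hrep : ∀ x, f x = ∑ i, f (Pi.single i 1) * x i := by
    intro x
    rw [LinearMap.pi_apply_eq_sum_univ f x]
    refine Finset.sum_congr rfl fun i _ => ?_
    rw [smul_eq_mul, mul_comm]
    congr 2
    ext j
    simp [Pi.single_apply, eq_comm]
  refine ⟨fun i => f (Pi.single i 1), fun h0 => hf ?_, fun x hx => ?_⟩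
  · ext i
    simpa using congrFun h0 i
  · rw [← hrep]
    exact hle (Submodule.subset_span hx)

theorem supNorm_lt_iff {n : ℕ} {x : Fin n → ℤ} {M : ℕ} (hM : 0 < M) :
    supNorm x < M ↔ ∀ i, |(x i : ℝ)| < M := by
  simp only [supNorm, Finset.sup_lt_iff (bot_lt_iff_ne_bot.2 hM.ne'), Finset.mem_univ,
    forall_const]
  refine forall_congr' fun i => ?_
  rw [← Int.cast_abs, Int.abs_eq_natAbs, Int.cast_natCast, Nat.cast_lt]

theorem latMin_pos {n : ℕ} (hn : 1 ≤ n) {Λ : AddSubgroup (Fin n → ℤ)} (hΛ : Λ.index ≠ 0) :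
    0 < latMin Λ := by
  have hne : {m : ℕ | ∃ x ∈ Λ, x ≠ 0 ∧ supNorm x = m}.Nonempty := by
    refine ⟨_, Λ.index • Pi.single ⟨0, hn⟩ 1, Λ.nsmul_index_mem _, ?_, rfl⟩
    rw [smul_ne_zero_iff]
    exact ⟨hΛ, by simp⟩
  obtain ⟨x, -, hx0, hx⟩ := Nat.sInf_mem hne
  change supNorm x = latMin Λ at hx
  rw [← hx, Nat.pos_iff_ne_zero]
  intro h0
  refine hx0 (funext fun i => ?_)
  have h1 := (supNorm_lt_iff one_pos).1 (h0.trans_lt one_pos) i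
  rw [Nat.cast_one] at h1
  exact Int.abs_lt_one_iff.1 (by exact_mod_cast h1)

theorem eq_of_abs_sub_lt_latMin {n : ℕ} {Λ : AddSubgroup (Fin n → ℤ)} (hΛ : 0 < latMin Λ)
    {x y : Fin n → ℤ} (hx : x ∈ Λ) (hy : y ∈ Λ) (h : ∀ i, |(x i : ℝ) - y i| < latMin Λ) :
    x = y := by
  by_contra hne
  have hlt : supNorm (x - y) < latMin Λ :=
    (supNorm_lt_iff hΛ).2 fun i => by simpa using h i
  exact hlt.not_ge (Nat.sInf_le ⟨x - y, Λ.sub_mem hx hy, sub_ne_zero.2 hne, rfl⟩)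

theorem add_pow_le_mul_pow_add_one {A t : ℝ} (hA : 0 ≤ A) (ht : 0 ≤ t) (k : ℕ) :
    (A * t + 2) ^ k ≤ (A + 2) ^ k * (t ^ k + 1) := by
  rcases le_total t 1 with h | h
  · calc (A * t + 2) ^ k ≤ (A + 2) ^ k := by gcongr; nlinarith
      _ ≤ (A + 2) ^ k * (t ^ k + 1) := le_mul_of_one_le_right (by positivity) (by
        have : 0 ≤ t ^ k := by positivity
        linarith)
  · calc (A * t + 2) ^ k ≤ ((A + 2) * t) ^ k := by gcongr; nlinarith
      _ = (A + 2) ^ k * t ^ k := mul_pow _ _ _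
      _ ≤ (A + 2) ^ k * (t ^ k + 1) := by gcongr; linarith

theorem stmt6 (n : ℕ) (hn : 1 ≤ n) :
    ∃ C : ℝ, 0 < C ∧
      ∀ (Λ : AddSubgroup (Fin n → ℤ)) (m : ℕ), Λ.index = m → m ≠ 0 →
        ∀ B : ℝ, 0 < B →
          (NLat Λ B : ℝ) ≤
            C * (B ^ n / (m : ℝ) + B ^ (n - 1) / (latMin Λ : ℝ) ^ (n - 1) + 1) := by
  refine ⟨(2 * n + 2) ^ (n - 1) + (2 * (n + 1) + 2) ^ n, by positivity, ?_⟩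
  rintro Λ m rfl hm B hB
  have hM : 0 < latMin Λ := latMin_pos hn hm
  have hM' : (0 : ℝ) < latMin Λ := by exact_mod_cast hM
  have hm' : (0 : ℝ) < Λ.index := by exact_mod_cast Nat.pos_of_ne_zero hm
  have hfin : {x : Fin n → ℤ | x ∈ Λ ∧ ∀ i, |(x i : ℝ)| ≤ B}.Finite :=
    (finite_intBox B).subset fun x hx => hx.2
  have hvol : (0 : ℝ) ≤ B ^ n / Λ.index := by positivity
  have hbdry : (0 : ℝ) ≤ (B / latMin Λ) ^ (n - 1) := by positivity
  rw [← div_pow]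
  set C₁ : ℝ := (2 * n + 2) ^ (n - 1)
  set C₂ : ℝ := (2 * (n + 1) + 2) ^ n
  have hC₁ : 0 ≤ C₁ := by positivity
  have hC₂ : 0 ≤ C₂ := by positivity
  by_cases hspan : Submodule.span ℝ ((fun (x : Fin n → ℤ) (i : Fin n) => (x i : ℝ)) ''
      {x | x ∈ Λ ∧ ∀ i, |(x i : ℝ)| ≤ B}) = ⊤
  · have hB1 : 1 ≤ B := by
      by_contra! hlt
      have hsub : (fun (x : Fin n → ℤ) (i : Fin n) => (x i : ℝ)) ''
          {x | x ∈ Λ ∧ ∀ i, |(x i : ℝ)| ≤ B} ⊆ {0} := by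
        rintro _ ⟨x, ⟨-, hx⟩, rfl⟩
        refine funext fun i => ?_
        have h1 : |(x i : ℝ)| < 1 := (hx i).trans_lt hlt
        have h2 : x i = 0 := Int.abs_lt_one_iff.1 (by exact_mod_cast h1)
        simp [h2]
      have hbot := Submodule.span_mono (R := ℝ) hsub
      rw [hspan, Submodule.span_zero_singleton, top_le_iff] at hbot
      have : Nonempty (Fin n) := ⟨⟨0, hn⟩⟩
      exact bot_ne_top hbot
    have hcount := index_mul_ncard_le_of_span_eq_top hB.le hspan
    have hle : (2 * ((n + 1) * B) + 2) ^ n ≤ C₂ * B ^ n := by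
      rw [← mul_pow]
      gcongr
      linarith
    have hN : (NLat Λ B : ℝ) ≤ C₂ * (B ^ n / Λ.index) := by
      rw [← mul_div_assoc, le_div_iff₀ hm', mul_comm]
      push_cast at hcount
      exact hcount.trans hle
    nlinarith
  · obtain ⟨a, ha, hrel⟩ := exists_linear_relation_of_span_ne_top hspan
    have hcount := card_le_of_separated_of_hyperplane (S := hfin.toFinset) (a := a) hM' hB.le
      (fun x hx => (hfin.mem_toFinset.1 hx).2)
      (fun x hx y hy => eq_of_abs_sub_lt_latMin hM (hfin.mem_toFinset.1 hx).1
        (hfin.mem_toFinset.1 hy).1) ha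
      (fun x hx => hrel _ ⟨x, hfin.mem_toFinset.1 hx, rfl⟩)
    rw [← Set.ncard_eq_toFinset_card _ hfin, ← mul_assoc] at hcount
    have hN : (NLat Λ B : ℝ) ≤ C₁ * ((B / latMin Λ) ^ (n - 1) + 1) :=
      hcount.trans (add_pow_le_mul_pow_add_one (by positivity) (by positivity) _)
    nlinarith

end
end

section
/- Let F ∈ ℤ[x₁,…,xₙ] be an incomplete norm form of degree d > n ≥ 2 with non-zero discriminant, and let ξ₁ = ξ₁(B) be an eventually increasing function tending to infinity with ξ₁(B) = O(log₂B/log₃B). Let N₃*(B) be the number of x ∈ ℤⁿ ∩ [−B,B]ⁿ for which x (mod p) ∈ 𝒮_p for some prime p > ξ₁. Then N₃*(B) = O(Bⁿ/(ξ₁ log ξ₁) + B^{n−1}). -/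
open MvPolynomial Filter Pointwise

noncomputable section

/-! ### Linear forms -/

lemma eval_linForm {R : Type*} [CommRing R] {n : ℕ} (c y : Fin n → R) :
    eval y (linForm c) = ∑ m, c m * y m := by
  simp [linForm]

lemma map_linForm {R S : Type*} [CommRing R] [CommRing S] (f : R →+* S) {n : ℕ} (c : Fin n → R) :
    (linForm c).map f = linForm fun m => f (c m) := by
  simp [linForm]

lemma pderiv_linForm {R : Type*} [CommRing R] {n : ℕ} (c : Fin n → R) (i : Fin n) :
    pderiv i (linForm c) = C (c i) := by
  classical
  simp [linForm, pderiv_X, Pi.single_apply]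

/-- The gradient of a product of two polynomials vanishing at `y` vanishes at `y`. -/
lemma eval_pderiv_mul_eq_zero {R : Type*} [CommRing R] {n : ℕ} {y : Fin n → R}
    {P Q : MvPolynomial (Fin n) R} (hP : eval y P = 0) (hQ : eval y Q = 0) (i : Fin n) :
    eval y (pderiv i (P * Q)) = 0 := by
  simp [Derivation.leibniz, hP, hQ]

/-- Solving `linForm c = 0` for the variable `X i`. -/
def solveVar {k : Type*} [Field k] {n : ℕ} (c : Fin n → k) (i m : Fin n) :
    MvPolynomial (Fin n) k :=
  X m - if m = i then C (c i)⁻¹ * linForm c else 0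

lemma aeval_solveVar_linForm {k : Type*} [Field k] {n : ℕ} {c : Fin n → k} {i : Fin n}
    (hi : c i ≠ 0) : aeval (solveVar c i) (linForm c) = 0 := by
  classical
  have h : C (c i) * (C (c i)⁻¹ * linForm c) = linForm c := by
    rw [← mul_assoc, ← C_mul, mul_inv_cancel₀ hi, C_1, one_mul]
  calc aeval (solveVar c i) (linForm c)
      = ∑ m, C (c m) * solveVar c i m := by simp [linForm, algebraMap_eq]
    _ = linForm c - C (c i) * (C (c i)⁻¹ * linForm c) := by
        simp only [solveVar, mul_sub, Finset.sum_sub_distrib, mul_ite, mul_zero,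
          Finset.sum_ite_eq', Finset.mem_univ, if_true]
        rfl
    _ = 0 := by rw [h, sub_self]

lemma linForm_dvd_of_aeval_solveVar {k : Type*} [Field k] {n : ℕ} {c : Fin n → k} {i : Fin n}
    {P : MvPolynomial (Fin n) k} (h : aeval (solveVar c i) P = 0) : linForm c ∣ P := by
  classical
  rw [← Ideal.mem_span_singleton, ← Ideal.Quotient.eq_zero_iff_mem]
  have key : (Ideal.Quotient.mkₐ k (Ideal.span {linForm c})).comp (aeval (solveVar c i))
      = Ideal.Quotient.mkₐ k (Ideal.span {linForm c}) := by
    refine MvPolynomial.algHom_ext fun m => ?_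
    simp only [AlgHom.comp_apply, aeval_X, Ideal.Quotient.mkₐ_eq_mk, solveVar, map_sub]
    rw [sub_eq_self, Ideal.Quotient.eq_zero_iff_mem, Ideal.mem_span_singleton]
    split_ifs
    · exact dvd_mul_left _ _
    · exact dvd_zero _
  have := AlgHom.congr_fun key P
  simp only [AlgHom.comp_apply, h, map_zero] at this
  exact this.symm

lemma map_aeval_solveVar {k E : Type*} [Field k] [Field E] (f : k →+* E) {n : ℕ}
    (c : Fin n → k) (i : Fin n) (P : MvPolynomial (Fin n) k) :
    (aeval (solveVar c i) P).map f = aeval (solveVar (fun m => f (c m)) i) (P.map f) := by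
  have hs : ∀ m, (solveVar c i m).map f = solveVar (fun m => f (c m)) i m := by
    intro m
    unfold solveVar
    split_ifs <;> simp [map_linForm]
  induction P using MvPolynomial.induction_on with
  | C a => simp [algebraMap_eq]
  | add p q hp hq => simp only [map_add, hp, hq]
  | mul_X p m hp => simp only [map_mul, hp, aeval_X, map_X, hs]

/-- If a form splits into linear factors over an extension field, then a factor of it that
vanishes at a rational nonsingular point has a rational linear factor. -/
lemma exists_linForm_dvd {k E : Type*} [Field k] [Field E] (f : k →+* E) {n d : ℕ}
    {Q G : MvPolynomial (Fin n) k} {L : Fin d → Fin n → E}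
    (hL : (Q * G).map f = ∏ j, linForm (L j)) {y : Fin n → k} (hQ : eval y Q = 0) {i : Fin n}
    (hi : eval y (pderiv i (Q * G)) ≠ 0) :
    ∃ c : Fin n → k, (∃ m, c m ≠ 0) ∧ linForm c ∣ Q := by
  classical
  set c : Fin n → k := fun m => eval y (pderiv m (Q * G)) with hc
  have hci : c i ≠ 0 := hi
  refine ⟨c, ⟨i, hci⟩, ?_⟩
  have hev : ∀ R : MvPolynomial (Fin n) k, f (eval y R) = eval (fun m => f (y m)) (R.map f) :=
    fun R => (map_eval f y R)
  have h0 : ∏ j, eval (fun m => f (y m)) (linForm (L j)) = 0 := by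
    rw [← map_prod, ← hL, ← hev, map_mul, hQ, zero_mul, map_zero]
  obtain ⟨j, -, hj⟩ := Finset.prod_eq_zero_iff.1 h0
  set w : E := eval (fun m => f (y m)) (∏ l ∈ Finset.univ.erase j, linForm (L l)) with hw
  have hcw : ∀ m, f (c m) = w * L j m := by
    intro m
    rw [hc, hev, ← pderiv_map, hL, ← Finset.mul_prod_erase _ _ (Finset.mem_univ j)]
    simp only [Derivation.leibniz, pderiv_linForm, smul_eq_mul, map_add, map_mul, hj, eval_C,
      zero_mul, zero_add, hw]
  have hform : linForm (fun m => f (c m)) = C w * linForm (L j) := by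
    simp only [linForm, hcw, Finset.mul_sum, C_mul, mul_assoc]
  have hw0 : w ≠ 0 := by
    intro h
    have := hcw i
    rw [h, zero_mul, map_eq_zero] at this
    exact hci this
  have hsub : aeval (solveVar (fun m => f (c m)) i) (linForm (L j)) = 0 := by
    have := aeval_solveVar_linForm (c := fun m => f (c m)) (i := i) (by simpa using hci)
    rw [hform, map_mul] at this
    refine (mul_eq_zero.1 this).resolve_left ?_
    simpa [algebraMap_eq] using hw0
  have hP : aeval (solveVar c i) Q * aeval (solveVar c i) G = 0 := by
    apply map_injective f f.injective
    rw [← map_mul, map_aeval_solveVar, hL, ← Finset.mul_prod_erase _ _ (Finset.mem_univ j),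
      map_mul, hsub, zero_mul, map_zero]
  rcases mul_eq_zero.1 hP with h | h
  · exact linForm_dvd_of_aeval_solveVar h
  · obtain ⟨G', hG⟩ := linForm_dvd_of_aeval_solveVar h
    refine absurd (eval_pderiv_mul_eq_zero hQ ?_ i) hi
    have hcy : eval y (linForm c) = 0 := by
      apply f.injective
      rw [hev, map_linForm, hform, map_mul, hj, mul_zero, map_zero]
    rw [hG, map_mul, hcy, zero_mul]

/-- The linear factorization can be carried over to every algebraically closed field of
characteristic zero. -/
lemma IsDecomp.exists_factorization {n d : ℕ} {F : MvPolynomial (Fin n) ℤ}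
    {L : Fin d → Fin n → ℂ} (h : IsDecomp F L) (E : Type*) [Field E] [CharZero E]
    [IsAlgClosed E] :
    ∃ L' : Fin d → Fin n → E, F.map (Int.castRingHom E) = ∏ j, linForm (L' j) := by
  let A := algebraicClosure ℚ ℂ
  have : Algebra.IsAlgebraic ℚ A := algebraicClosure.isAlgebraic ℚ ℂ
  let φ : A →ₐ[ℚ] E := IsAlgClosed.lift
  have hmem : ∀ j i, L j i ∈ A := fun j i =>
    mem_algebraicClosure_iff.2 ((h.1 j i).tower_top (A := ℚ)).isAlgebraic
  have hA : F.map (Int.castRingHom A) = ∏ j, linForm fun i => (⟨L j i, hmem j i⟩ : A) := by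
    apply map_injective (algebraMap A ℂ) (algebraMap A ℂ).injective
    rw [MvPolynomial.map_map, map_prod, RingHom.ext_int ((algebraMap A ℂ).comp (Int.castRingHom A))
      (Int.castRingHom ℂ), h.2]
    simp only [map_linForm]
    rfl
  refine ⟨fun j i => φ ⟨L j i, hmem j i⟩, ?_⟩
  have := congrArg (MvPolynomial.map φ.toRingHom) hA
  rw [MvPolynomial.map_map, map_prod, RingHom.ext_int (φ.toRingHom.comp (Int.castRingHom A))
    (Int.castRingHom E)] at this
  rw [this]
  simp only [map_linForm]
  rfl

/-! ### Singular points modulo `p` -/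

/-- The univariate polynomial `t ↦ Q (u + t eᵢ)`. -/
def lineRestrict {R : Type*} [CommRing R] {n : ℕ} (u : Fin n → R) (i : Fin n) :
    MvPolynomial (Fin n) R →ₐ[R] Polynomial R :=
  aeval fun m => Polynomial.C (u m) + if m = i then Polynomial.X else 0

lemma eval_lineRestrict {R : Type*} [CommRing R] {n : ℕ} (u : Fin n → R) (i : Fin n) (z : R)
    (Q : MvPolynomial (Fin n) R) :
    (lineRestrict u i Q).eval z = eval (fun m => u m + if m = i then z else 0) Q := by
  induction Q using MvPolynomial.induction_on with
  | C a => simp [lineRestrict, Polynomial.algebraMap_eq]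
  | add p q hp hq => simp only [map_add, Polynomial.eval_add, hp, hq]
  | mul_X p m hp =>
    simp only [map_mul, Polynomial.eval_mul, hp, eval_X]
    congr 1
    simp only [lineRestrict, aeval_X]
    split_ifs <;> simp

lemma derivative_lineRestrict {R : Type*} [CommRing R] {n : ℕ} (u : Fin n → R) (i : Fin n)
    (Q : MvPolynomial (Fin n) R) :
    Polynomial.derivative (lineRestrict u i Q) = lineRestrict u i (pderiv i Q) := by
  classical
  induction Q using MvPolynomial.induction_on with
  | C a => simp [lineRestrict, Polynomial.algebraMap_eq]
  | add p q hp hq => simp only [map_add, hp, hq]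
  | mul_X p m hp =>
    have hX : Polynomial.derivative (lineRestrict u i (X m)) = lineRestrict u i (pderiv i (X m)) := by
      simp only [lineRestrict, aeval_X, pderiv_X, Pi.single_apply]
      split_ifs <;> simp_all
    rw [map_mul, Polynomial.derivative_mul, hX, hp, Derivation.leibniz]
    simp only [smul_eq_mul, map_add, map_mul]
    ring

lemma toZMod_eq_zero_iff {p : ℕ} [Fact p.Prime] (z : ℤ_[p]) :
    PadicInt.toZMod z = 0 ↔ ‖z‖ < 1 := by
  rw [← RingHom.mem_ker, PadicInt.ker_toZMod, IsLocalRing.mem_maximalIdeal, PadicInt.mem_nonunits]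

lemma toZMod_eval {p : ℕ} [Fact p.Prime] {n : ℕ} (y : Fin n → ℤ_[p])
    (Q : MvPolynomial (Fin n) ℤ_[p]) :
    PadicInt.toZMod (eval y Q) =
      eval (fun m => PadicInt.toZMod (y m)) (Q.map PadicInt.toZMod) :=
  map_eval PadicInt.toZMod y Q

lemma toZMod_eval_intCast {p : ℕ} [Fact p.Prime] {n : ℕ} (x : Fin n → ℤ)
    (Q : MvPolynomial (Fin n) ℤ) (y : Fin n → ℤ_[p])
    (hy : ∀ m, PadicInt.toZMod (y m) = (x m : ZMod p)) :
    PadicInt.toZMod (eval y (Q.map (Int.castRingHom ℤ_[p]))) = ((eval x Q : ℤ) : ZMod p) := by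
  rw [toZMod_eval, MvPolynomial.map_map, funext hy,
    RingHom.ext_int (PadicInt.toZMod.comp (Int.castRingHom ℤ_[p])) (Int.castRingHom (ZMod p))]
  exact (map_eval (Int.castRingHom (ZMod p)) x Q).symm

/-- Points of `𝒮_p` are singular points of `F` modulo `p`. -/
lemma Sp.dvd {n d : ℕ} {F : MvPolynomial (Fin n) ℤ} {L : Fin d → Fin n → ℂ}
    (hF : IsDecomp F L) {p : ℕ} {hp : p.Prime} {τ : ℕ}
    {𝓛 : Fin τ → Fin n → @PadicInt p ⟨hp⟩} {Fstar : MvPolynomial (Fin n) (@PadicInt p ⟨hp⟩)}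
    (hfact : IsPadicFact F p hp 𝓛 Fstar) {x : Fin n → ℤ}
    (hx : Sp p hp 𝓛 Fstar fun i => (x i : ZMod p)) :
    (p : ℤ) ∣ eval x F ∧ ∀ i, (p : ℤ) ∣ eval x (pderiv i F) := by
  classical
  have : Fact p.Prime := ⟨hp⟩
  obtain ⟨hFG, hno⟩ := hfact
  set G : MvPolynomial (Fin n) ℤ_[p] := ∏ i, linForm (𝓛 i) with hG
  set u : Fin n → ℤ_[p] := fun m => (x m : ℤ_[p]) with hu
  have hu' : ∀ m, PadicInt.toZMod (u m) = (x m : ZMod p) := fun m => by simp [hu]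
  have hcast : ∀ Q : MvPolynomial (Fin n) ℤ,
      (p : ℤ) ∣ eval x Q ↔ eval (fun m => (x m : ZMod p))
        ((Q.map (Int.castRingHom ℤ_[p])).map PadicInt.toZMod) = 0 := by
    intro Q
    rw [← ZMod.intCast_zmod_eq_zero_iff_dvd, ← toZMod_eval_intCast x Q u hu', toZMod_eval,
      funext hu']
  have hdF : ∀ i, (pderiv i F).map (Int.castRingHom ℤ_[p]) = pderiv i (Fstar * G) :=
    fun i => by rw [← pderiv_map, hFG]
  rcases hx with ⟨i, j, hij, hi, hj⟩ | hx
  · have hfac : (Fstar * G).map PadicInt.toZMod =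
        (linForm fun m => PadicInt.toZMod (𝓛 i m)) *
          ((linForm fun m => PadicInt.toZMod (𝓛 j m)) *
          (Fstar * ∏ l ∈ (Finset.univ.erase i).erase j, linForm (𝓛 l)).map PadicInt.toZMod) := by
      have hji : j ∈ Finset.univ.erase i := Finset.mem_erase.2 ⟨hij.ne', Finset.mem_univ _⟩
      rw [hG, ← Finset.mul_prod_erase _ _ (Finset.mem_univ i), ← Finset.mul_prod_erase _ _ hji]
      simp only [map_mul, map_linForm]
      ring
    have hi0 : eval (fun m => (x m : ZMod p)) (linForm fun m => PadicInt.toZMod (𝓛 i m)) = 0 := by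
      rw [eval_linForm]; exact hi
    have hj0 : eval (fun m => (x m : ZMod p)) (linForm fun m => PadicInt.toZMod (𝓛 j m)) = 0 := by
      rw [eval_linForm]; exact hj
    constructor
    · rw [hcast, hFG, hfac, map_mul, hi0, zero_mul]
    · intro l
      rw [hcast, hdF, ← pderiv_map, hfac]
      exact eval_pderiv_mul_eq_zero hi0 (by rw [map_mul, hj0, zero_mul]) l
  · refine ⟨by rw [hcast, hFG, map_mul, map_mul, hx, zero_mul], fun i => ?_⟩
    by_contra hndvd
    have hder : eval (fun m => (x m : ZMod p)) ((pderiv i Fstar).map PadicInt.toZMod) ≠ 0 := by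
      intro h
      apply hndvd
      rw [hcast, hdF, Derivation.leibniz]
      simp [hx, h]
    set q := lineRestrict u i Fstar with hq
    have h0 : ∀ Q : MvPolynomial (Fin n) ℤ_[p], (lineRestrict u i Q).eval 0 = eval u Q := by
      intro Q
      rw [eval_lineRestrict]
      simp
    have hq0 : ‖q.eval 0‖ < 1 := by
      rw [← toZMod_eq_zero_iff, hq, h0, toZMod_eval, funext hu', hx]
    have hq1 : ‖q.derivative.eval 0‖ = 1 := by
      refine le_antisymm (PadicInt.norm_le_one _) (not_lt.1 fun h => hder ?_)
      rwa [← toZMod_eq_zero_iff, hq, derivative_lineRestrict, h0, toZMod_eval, funext hu'] at h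
    obtain ⟨z, hz, hz0, -⟩ := hensels_lemma (F := q) (a := (0 : ℤ_[p]))
      (by simpa only [Polynomial.coe_aeval_eq_eval, hq1, one_pow] using hq0)
    rw [Polynomial.coe_aeval_eq_eval] at hz hz0
    rw [hq1, sub_zero, ← toZMod_eq_zero_iff] at hz0
    rw [hq, eval_lineRestrict] at hz
    set y : Fin n → ℤ_[p] := fun m => u m + if m = i then z else 0 with hy
    have hy' : ∀ m, PadicInt.toZMod (y m) = (x m : ZMod p) := by
      intro m
      rw [hy]
      simp only [map_add, hu']
      split_ifs <;> simp [hz0]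
    have hyi : eval y (pderiv i (Fstar * G)) ≠ 0 := by
      intro h
      apply hndvd
      rw [← ZMod.intCast_zmod_eq_zero_iff_dvd, ← toZMod_eval_intCast x _ y hy', hdF, h, map_zero]
    obtain ⟨L', hL'⟩ := hF.exists_factorization (AlgebraicClosure ℚ_[p])
    let ι : ℤ_[p] →+* ℚ_[p] := PadicInt.Coe.ringHom
    have hι : Function.Injective ι := Subtype.coe_injective
    have hsplit : (Fstar.map ι * G.map ι).map (algebraMap ℚ_[p] (AlgebraicClosure ℚ_[p]))
        = ∏ j, linForm (L' j) := by
      rw [← map_mul, ← hFG, MvPolynomial.map_map, MvPolynomial.map_map, ← hL']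
      congr 2
    obtain ⟨c, hc, hdvd⟩ := exists_linForm_dvd _ hsplit (y := ι ∘ y) (i := i)
      (by rw [← map_eval ι y, hz, map_zero])
      (by
        rw [← map_mul, pderiv_map, ← map_eval ι y]
        exact fun h => hyi (hι (h.trans (map_zero ι).symm)))
    exact hno c hc hdvd

/-! ### Sums over primes -/

lemma sum_primes_log_div_sq_le (K : ℕ) : ∀ M : ℝ, 0 < M →
    ∑ p ∈ Finset.Ioc ⌊M⌋₊ ⌊2 ^ K * M⌋₊ with p.Prime, Real.log p / (p : ℝ) ^ 2
      ≤ 4 * Real.log 4 / M := by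
  have hlog4 : 0 < Real.log 4 := Real.log_pos (by norm_num)
  induction K with
  | zero =>
    intro M hM
    simp only [pow_zero, one_mul, Finset.Ioc_self, Finset.filter_empty, Finset.sum_empty]
    positivity
  | succ K ih =>
    intro M hM
    have hfirst : ∑ p ∈ Finset.Ioc ⌊M⌋₊ ⌊2 * M⌋₊ with p.Prime, Real.log p / (p : ℝ) ^ 2
        ≤ 2 * Real.log 4 / M := by
      calc ∑ p ∈ Finset.Ioc ⌊M⌋₊ ⌊2 * M⌋₊ with p.Prime, Real.log p / (p : ℝ) ^ 2
          ≤ ∑ p ∈ Finset.Ioc ⌊M⌋₊ ⌊2 * M⌋₊ with p.Prime, Real.log p / M ^ 2 := by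
            refine Finset.sum_le_sum fun p hp => ?_
            simp only [Finset.mem_filter, Finset.mem_Ioc] at hp
            have : M < p := (Nat.floor_lt hM.le).1 hp.1.1
            have := Real.log_natCast_nonneg p
            gcongr
        _ ≤ ∑ p ∈ Finset.Ioc 0 ⌊2 * M⌋₊ with p.Prime, Real.log p / M ^ 2 := by
            refine Finset.sum_le_sum_of_subset_of_nonneg ?_ fun p _ _ => ?_
            · exact Finset.filter_subset_filter _ (Finset.Ioc_subset_Ioc_left (Nat.zero_le _))
            · have := Real.log_natCast_nonneg p
              positivity
        _ = Chebyshev.theta (2 * M) / M ^ 2 := by rw [← Finset.sum_div, Chebyshev.theta]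
        _ ≤ Real.log 4 * (2 * M) / M ^ 2 := by
            gcongr
            exact Chebyshev.theta_le_log4_mul_x (by positivity)
        _ = 2 * Real.log 4 / M := by field_simp
    have hrest := ih (2 * M) (by positivity)
    have hsplit : Finset.Ioc ⌊M⌋₊ ⌊2 ^ (K + 1) * M⌋₊ =
        Finset.Ioc ⌊M⌋₊ ⌊2 * M⌋₊ ∪ Finset.Ioc ⌊2 * M⌋₊ ⌊2 ^ K * (2 * M)⌋₊ := by
      rw [Finset.Ioc_union_Ioc_eq_Ioc (Nat.floor_le_floor (by linarith))
        (Nat.floor_le_floor (le_mul_of_one_le_left (by positivity) (one_le_pow₀ one_le_two))),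
        pow_succ, mul_assoc]
    rw [hsplit, Finset.filter_union]
    have hnonneg : ∀ p : ℕ, 0 ≤ Real.log p / (p : ℝ) ^ 2 := fun p => by
      have := Real.log_natCast_nonneg p
      positivity
    refine (le_of_add_le_of_nonneg_left Finset.sum_union_inter.le
      (Finset.sum_nonneg fun p _ => hnonneg p)).trans ?_
    calc _ ≤ 2 * Real.log 4 / M + 4 * Real.log 4 / (2 * M) := add_le_add hfirst hrest
      _ = 4 * Real.log 4 / M := by field_simp; ring

/-- `∑_{p > M} p⁻² ≪ 1 / (M log M)`. -/
lemma sum_primes_inv_sq_le {M : ℝ} (hM : 1 < M) (N : ℕ) :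
    ∑ p ∈ Finset.Ioc ⌊M⌋₊ N with p.Prime, 1 / (p : ℝ) ^ 2
      ≤ 4 * Real.log 4 / (M * Real.log M) := by
  have hM0 : 0 < M := by linarith
  have hlogM : 0 < Real.log M := Real.log_pos hM
  have hN : N ≤ ⌊2 ^ N * M⌋₊ := by
    refine Nat.le_floor ?_
    have h : (N : ℝ) ≤ 2 ^ N := by exact_mod_cast Nat.lt_two_pow_self.le
    exact h.trans (le_mul_of_one_le_right (by positivity) hM.le)
  calc ∑ p ∈ Finset.Ioc ⌊M⌋₊ N with p.Prime, 1 / (p : ℝ) ^ 2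
      ≤ ∑ p ∈ Finset.Ioc ⌊M⌋₊ N with p.Prime, Real.log p / (p : ℝ) ^ 2 / Real.log M := by
        refine Finset.sum_le_sum fun p hp => ?_
        simp only [Finset.mem_filter, Finset.mem_Ioc] at hp
        have : M < p := (Nat.floor_lt hM0.le).1 hp.1.1
        rw [div_right_comm]
        gcongr
        rw [one_le_div hlogM]
        exact Real.log_le_log hM0 this.le
    _ ≤ ∑ p ∈ Finset.Ioc ⌊M⌋₊ ⌊2 ^ N * M⌋₊ with p.Prime,
          Real.log p / (p : ℝ) ^ 2 / Real.log M := by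
        refine Finset.sum_le_sum_of_subset_of_nonneg ?_ fun p _ _ => ?_
        · exact Finset.filter_subset_filter _ (Finset.Ioc_subset_Ioc_right hN)
        · have := Real.log_natCast_nonneg p
          positivity
    _ ≤ 4 * Real.log 4 / M / Real.log M := by
        rw [← Finset.sum_div]
        gcongr
        exact sum_primes_log_div_sq_le N M hM0
    _ = 4 * Real.log 4 / (M * Real.log M) := by rw [div_div]

/-! ### Zeros of polynomials in boxes -/

/-- The integer points of the cube `[-N, N]ᵐ`. -/
def cube (m N : ℕ) : Finset (Fin m → ℤ) := Fintype.piFinset fun _ => Finset.Icc (-(N : ℤ)) N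

lemma mem_cube {m N : ℕ} {y : Fin m → ℤ} : y ∈ cube m N ↔ ∀ i, |y i| ≤ N := by
  simp [cube, abs_le]

lemma card_Icc_neg (N : ℕ) : (Finset.Icc (-(N : ℤ)) N).card = 2 * N + 1 := by
  rw [Int.card_Icc]
  omega

lemma card_cube (m N : ℕ) : (cube m N).card = (2 * N + 1) ^ m := by
  simp only [cube, Fintype.card_piFinset, card_Icc_neg, Finset.prod_const, Finset.card_univ,
    Fintype.card_fin]

lemma card_zeros_piFinset_le {A : Type*} [CommRing A] [IsDomain A] [DecidableEq A] {m : ℕ}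
    (hm : 0 < m) {P : MvPolynomial (Fin m) A} (hP : P ≠ 0) (S : Finset A) :
    ((Fintype.piFinset fun _ : Fin m => S).filter fun x => eval x P = 0).card
      ≤ (∑ i, P.degreeOf i) * S.card ^ (m - 1) := by
  obtain ⟨m, rfl⟩ := Nat.exists_eq_succ_of_ne_zero hm.ne'
  rcases S.eq_empty_or_nonempty with rfl | hS
  · simp
  have hS0 : (0 : ℚ≥0) < S.card := by exact_mod_cast hS.card_pos
  have h := schwartz_zippel_sum_degreeOf hP fun _ => S
  rw [Finset.prod_const, Finset.card_univ, Fintype.card_fin, div_le_iff₀ (by positivity),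
    ← Finset.sum_div, div_mul_eq_mul_div, pow_succ, ← mul_assoc,
    mul_div_cancel_right₀ _ hS0.ne'] at h
  exact_mod_cast h

lemma card_filter_intCast_eq_le {p : ℕ} (hp : 0 < p) (N : ℕ) (r : ZMod p) :
    ((Finset.Icc (-(N : ℤ)) N).filter fun t : ℤ => (t : ZMod p) = r).card ≤ (2 * N + 1) / p + 1 := by
  obtain ⟨v, rfl⟩ := ZMod.intCast_surjective r
  have hset : ((Finset.Icc (-(N : ℤ)) N).filter fun t : ℤ => (t : ZMod p) = v) =
      (Finset.Ioc (-(N : ℤ) - 1) N).filter fun t => t ≡ v [ZMOD p] := by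
    ext t
    simp only [Finset.mem_filter, Finset.mem_Icc, Finset.mem_Ioc, ZMod.intCast_eq_intCast_iff]
    constructor <;> rintro ⟨h, h'⟩ <;> exact ⟨by omega, h'⟩
  have hp' : (0 : ℤ) < p := by exact_mod_cast hp
  have hpq : (0 : ℚ) < p := by exact_mod_cast hp
  have h := Int.Ioc_filter_modEq_card (-(N : ℤ) - 1) N hp' v
  rw [← hset] at h
  set c := ((Finset.Icc (-(N : ℤ)) N).filter fun t : ℤ => (t : ZMod p) = v).card with hc
  rw [← Nat.sub_le_iff_le_add, Nat.le_div_iff_mul_le hp]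
  rcases Nat.eq_zero_or_pos c with h0 | h0
  · simp [h0]
  have hc1 : (c : ℤ) = ⌊((N : ℤ) - v : ℚ) / (p : ℤ)⌋ - ⌊((-(N : ℤ) - 1 : ℤ) - v : ℚ) / (p : ℤ)⌋ := by
    rcases max_choice (⌊((N : ℤ) - v : ℚ) / (p : ℤ)⌋ - ⌊((-(N : ℤ) - 1 : ℤ) - v : ℚ) / (p : ℤ)⌋) 0
      with h' | h'
    · exact h.trans h'
    · rw [h'] at h
      omega
  have hq : (c : ℚ) - 1 ≤ (2 * N + 1) / p := by
    have h1 := Int.floor_le (((N : ℤ) - v : ℚ) / (p : ℤ))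
    have h2 := Int.lt_floor_add_one (((-(N : ℤ) - 1 : ℤ) - v : ℚ) / (p : ℤ))
    have h3 : (c : ℚ) = (⌊((N : ℤ) - v : ℚ) / (p : ℤ)⌋ : ℚ) -
        (⌊((-(N : ℤ) - 1 : ℤ) - v : ℚ) / (p : ℤ)⌋ : ℚ) := by exact_mod_cast hc1
    have h4 : (2 * N + 1 : ℚ) / p =
        ((N : ℤ) - v : ℚ) / (p : ℤ) - ((-(N : ℤ) - 1 : ℤ) - v : ℚ) / (p : ℤ) := by
      push_cast
      ring
    linarith
  rw [le_div_iff₀ hpq] at hq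
  have : (((c - 1) * p : ℕ) : ℚ) ≤ ((2 * N + 1 : ℕ) : ℚ) := by
    push_cast [Nat.cast_sub h0]
    exact hq
  exact_mod_cast this

lemma degreeOf_map_le {A A' : Type*} [CommSemiring A] [CommSemiring A'] {σ : Type*} (f : A →+* A')
    (P : MvPolynomial σ A) (i : σ) : (P.map f).degreeOf i ≤ P.degreeOf i := by
  classical
  rw [degreeOf_def, degreeOf_def]
  exact Multiset.count_le_of_le i degrees_map_le

/-- The number of points of a cube at which a polynomial vanishes modulo `p`. -/
lemma card_cube_filter_dvd_le {m : ℕ} (hm : 0 < m) {p : ℕ} (hp : p.Prime)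
    {R : MvPolynomial (Fin m) ℤ} (hR : R.map (Int.castRingHom (ZMod p)) ≠ 0) (N : ℕ) :
    ((cube m N).filter fun y => (p : ℤ) ∣ eval y R).card ≤
      ((2 * N + 1) / p + 1) ^ m * ((∑ i, R.degreeOf i) * p ^ (m - 1)) := by
  classical
  have : Fact p.Prime := ⟨hp⟩
  let red : (Fin m → ℤ) → Fin m → ZMod p := fun y i => (y i : ZMod p)
  let Z : Finset (Fin m → ZMod p) := (Fintype.piFinset fun _ => Finset.univ).filter fun x =>
    eval x (R.map (Int.castRingHom (ZMod p))) = 0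
  have hmaps : ∀ y ∈ (cube m N).filter fun y => (p : ℤ) ∣ eval y R, red y ∈ Z := by
    intro y hy
    simp only [Z, Finset.mem_filter, Fintype.mem_piFinset, Finset.mem_univ, implies_true, true_and]
    rw [Finset.mem_filter, ← ZMod.intCast_zmod_eq_zero_iff_dvd] at hy
    exact (map_eval (Int.castRingHom (ZMod p)) y R).symm.trans hy.2
  refine (Finset.card_le_mul_card_image_of_maps_to hmaps (((2 * N + 1) / p + 1) ^ m) ?_).trans ?_
  · intro b _
    calc _ ≤ (Fintype.piFinset fun i =>
            (Finset.Icc (-(N : ℤ)) N).filter fun t : ℤ => (t : ZMod p) = b i).card := by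
          refine Finset.card_le_card fun y hy => ?_
          simp only [Finset.mem_filter, cube, Fintype.mem_piFinset] at hy ⊢
          exact fun i => ⟨hy.1.1 i, congrFun hy.2 i⟩
      _ ≤ ∏ _i : Fin m, ((2 * N + 1) / p + 1) := by
          rw [Fintype.card_piFinset]
          exact Finset.prod_le_prod' fun i _ => card_filter_intCast_eq_le hp.pos N (b i)
      _ = _ := by simp
  · refine Nat.mul_le_mul_left _ ((card_zeros_piFinset_le hm hR Finset.univ).trans ?_)
    rw [Finset.card_univ, ZMod.card]
    exact Nat.mul_le_mul_right _ (Finset.sum_le_sum fun i _ => degreeOf_map_le _ _ _)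

/-- The number of integers in an interval at which a univariate polynomial vanishes modulo `p`. -/
lemma card_Icc_filter_dvd_eval_le {p : ℕ} (hp : p.Prime) {g : Polynomial ℤ} {D : ℕ}
    (hD : g.natDegree ≤ D) (hg : g.map (Int.castRingHom (ZMod p)) ≠ 0) (N : ℕ) :
    ((Finset.Icc (-(N : ℤ)) N).filter fun t => (p : ℤ) ∣ g.eval t).card ≤
      ((2 * N + 1) / p + 1) * D := by
  classical
  have : Fact p.Prime := ⟨hp⟩
  have hmaps : ∀ t ∈ (Finset.Icc (-(N : ℤ)) N).filter fun t => (p : ℤ) ∣ g.eval t,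
      (t : ZMod p) ∈ (g.map (Int.castRingHom (ZMod p))).roots.toFinset := by
    intro t ht
    rw [Finset.mem_filter, ← ZMod.intCast_zmod_eq_zero_iff_dvd] at ht
    rw [Multiset.mem_toFinset, Polynomial.mem_roots hg, Polynomial.IsRoot,
      Polynomial.eval_intCast_map]
    exact ht.2
  refine (Finset.card_le_mul_card_image_of_maps_to hmaps ((2 * N + 1) / p + 1) ?_).trans ?_
  · intro b _
    refine (Finset.card_le_card ?_).trans (card_filter_intCast_eq_le hp.pos N b)
    exact Finset.filter_subset_filter _ (Finset.filter_subset _ _)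
  · refine Nat.mul_le_mul_left _ ((Multiset.toFinset_card_le _).trans ?_)
    exact (Polynomial.card_roots' _).trans (Polynomial.natDegree_map_le.trans hD)

lemma exists_abs_eval_le_pow {m : ℕ} (R : MvPolynomial (Fin m) ℤ) :
    ∃ e : ℕ, ∀ N : ℕ, 2 ≤ N → ∀ y ∈ cube m N, |eval y R| ≤ (N : ℤ) ^ e := by
  induction R using MvPolynomial.induction_on with
  | C a =>
    refine ⟨a.natAbs, fun N hN y _ => ?_⟩
    rw [eval_C, Int.abs_eq_natAbs]
    exact_mod_cast Nat.lt_two_pow_self.le.trans (Nat.pow_le_pow_left hN _)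
  | add P Q hP hQ =>
    obtain ⟨e, he⟩ := hP
    obtain ⟨e', he'⟩ := hQ
    refine ⟨e + e' + 1, fun N hN y hy => ?_⟩
    have hN' : (2 : ℤ) ≤ N := by exact_mod_cast hN
    have hN1 : (1 : ℤ) ≤ N := by linarith
    have h1 : (N : ℤ) ^ e ≤ (N : ℤ) ^ (e + e') := pow_le_pow_right₀ hN1 (by omega)
    have h2 : (N : ℤ) ^ e' ≤ (N : ℤ) ^ (e + e') := pow_le_pow_right₀ hN1 (by omega)
    rw [map_add, pow_succ]
    nlinarith [abs_add_le (eval y P) (eval y Q), he N hN y hy, he' N hN y hy,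
      pow_nonneg (by linarith : (0 : ℤ) ≤ N) (e + e')]
  | mul_X P i hP =>
    obtain ⟨e, he⟩ := hP
    refine ⟨e + 1, fun N hN y hy => ?_⟩
    rw [map_mul, eval_X, abs_mul, pow_succ]
    exact mul_le_mul (he N hN y hy) (mem_cube.1 hy i) (abs_nonneg _) (by positivity)

/-- A nonzero integer of size at most `N ^ e` has at most `e` prime factors exceeding `N`. -/
lemma card_primeFactors_filter_lt_le {N e : ℕ} (hN : 2 ≤ N) {a : ℤ} (ha : a ≠ 0)
    (hae : |a| ≤ (N : ℤ) ^ e) : (a.natAbs.primeFactors.filter (N < ·)).card ≤ e := by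
  have ha0 : a.natAbs ≠ 0 := Int.natAbs_ne_zero.2 ha
  have hle : a.natAbs ≤ N ^ e := by
    rw [Int.abs_eq_natAbs] at hae
    exact_mod_cast hae
  refine (Nat.pow_le_pow_iff_right (by omega : 1 < N)).1 (le_trans ?_ hle)
  calc N ^ (a.natAbs.primeFactors.filter (N < ·)).card
      ≤ ∏ p ∈ a.natAbs.primeFactors.filter (N < ·), p :=
        Finset.pow_card_le_prod _ _ _ fun p hp => (Finset.mem_filter.1 hp).2.le
    _ ≤ ∏ p ∈ a.natAbs.primeFactors, p :=
        Finset.prod_le_prod_of_subset_of_one_le' (Finset.filter_subset _ _)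
          fun p hp _ => (Nat.prime_of_mem_primeFactors hp).one_le
    _ ≤ a.natAbs := Nat.le_of_dvd (Nat.pos_of_ne_zero ha0) (Nat.prod_primeFactors_dvd _)

/-! ### The geometric sieve -/

lemma card_le_mul_card_of_fibers {α β : Type*} [DecidableEq α] {T : Finset (α × β)}
    {W : Finset α} {k : ℕ} (V : α → Finset β) (hT : ∀ z ∈ T, z.1 ∈ W ∧ z.2 ∈ V z.1)
    (hV : ∀ y ∈ W, (V y).card ≤ k) : T.card ≤ k * W.card := by
  refine Finset.card_le_mul_card_image_of_maps_to (f := Prod.fst) (fun z hz => (hT z hz).1) k ?_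
  intro y hy
  refine le_trans (Finset.card_le_card_of_injOn Prod.snd (fun z hz => ?_) ?_) (hV y hy)
  · obtain ⟨hzT, rfl⟩ := Finset.mem_filter.1 hz
    exact (hT z hzT).2
  · intro z hz z' hz' h
    exact Prod.ext ((Finset.mem_filter.1 hz).2.trans (Finset.mem_filter.1 hz').2.symm) h

lemma exists_forall_prime_map_ne_zero {σ : Type*} {R : MvPolynomial σ ℤ} (hR : R ≠ 0) :
    ∃ b : ℕ, ∀ p : ℕ, b < p → R.map (Int.castRingHom (ZMod p)) ≠ 0 := by
  obtain ⟨s, hs⟩ := ne_zero_iff.1 hR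
  refine ⟨(coeff s R).natAbs, fun p hp h => hs ?_⟩
  have hcoeff := congrArg (coeff s) h
  rw [coeff_map, coeff_zero, eq_intCast, ZMod.intCast_zmod_eq_zero_iff_dvd] at hcoeff
  exact Int.eq_zero_of_abs_lt_dvd hcoeff (by rw [Int.abs_eq_natAbs]; exact_mod_cast hp)

/-- The number of integer points `(y, t)` of a cube for which some prime `p > M` divides both
`R(y)` and `f(y, t)`, where `f` has constant leading coefficient in `t`. -/
lemma geometric_sieve {m : ℕ} (hm : 0 < m) {f : Polynomial (MvPolynomial (Fin m) ℤ)} {a : ℤ}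
    (ha : a ≠ 0) (hlead : f.leadingCoeff = C a) {R : MvPolynomial (Fin m) ℤ} (hR : R ≠ 0) :
    ∃ A M₀ : ℝ, 0 < A ∧ 1 < M₀ ∧ ∀ M : ℝ, M₀ ≤ M → ∀ N : ℕ, 2 ≤ N →
      ∀ T : Finset ((Fin m → ℤ) × ℤ),
      (∀ z ∈ T, z.1 ∈ cube m N ∧ z.2 ∈ Finset.Icc (-(N : ℤ)) N ∧
        ∃ p : ℕ, p.Prime ∧ M < p ∧ (p : ℤ) ∣ eval z.1 R ∧
          (p : ℤ) ∣ (f.map (eval z.1)).eval z.2) →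
      (T.card : ℝ) ≤ A * ((N : ℝ) ^ (m + 1) / (M * Real.log M) + (N : ℝ) ^ m) := by
  classical
  obtain ⟨b, hb⟩ := exists_forall_prime_map_ne_zero hR
  obtain ⟨e, he⟩ := exists_abs_eval_le_pow R
  set D := f.natDegree with hD
  set DR := ∑ i, R.degreeOf i with hDR
  refine ⟨D * DR * 4 ^ (m + 1) * (4 * Real.log 4) + (DR + 2 * e * D) * 3 ^ m + 1,
    b + a.natAbs + 2, ?_, ?_, ?_⟩
  · have : 0 < Real.log 4 := Real.log_pos (by norm_num)
    positivity
  · have : (0 : ℝ) ≤ b + a.natAbs := by positivity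
    linarith
  intro M hM N hN T hT
  have hlog4 : 0 < Real.log 4 := Real.log_pos (by norm_num)
  have hM1 : 1 < M := by
    have : (0 : ℝ) ≤ b + a.natAbs := by positivity
    linarith
  have hlogM : 0 < Real.log M := Real.log_pos hM1
  have hNpos : (0 : ℝ) < N := by exact_mod_cast (by omega : 0 < N)
  let I := Finset.Icc (-(N : ℤ)) N
  let V : ℕ → (Fin m → ℤ) → Finset ℤ := fun p y =>
    I.filter fun t => (p : ℤ) ∣ (f.map (eval y)).eval t
  have hRp : ∀ p : ℕ, M < p → R.map (Int.castRingHom (ZMod p)) ≠ 0 := by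
    intro p hp
    apply hb
    have : (b : ℝ) < p := by
      have : (0 : ℝ) ≤ a.natAbs := by positivity
      linarith
    exact_mod_cast this
  have hV : ∀ p : ℕ, p.Prime → M < p → ∀ y, (V p y).card ≤ ((2 * N + 1) / p + 1) * D := by
    intro p hp hMp y
    refine card_Icc_filter_dvd_eval_le hp (Polynomial.natDegree_map_le) (fun h => ?_) N
    have hcoeff := congrArg (fun q => Polynomial.coeff q D) h
    simp only [Polynomial.coeff_map, Polynomial.coeff_zero, hD, Polynomial.coeff_natDegree, hlead,
      eval_C] at hcoeff
    rw [eq_intCast, ZMod.intCast_zmod_eq_zero_iff_dvd] at hcoeff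
    refine ha (Int.eq_zero_of_abs_lt_dvd hcoeff ?_)
    have : (a.natAbs : ℝ) < p := by
      have : (0 : ℝ) ≤ b := by positivity
      linarith
    rw [Int.abs_eq_natAbs]
    exact_mod_cast this
  let small : Finset ((Fin m → ℤ) × ℤ) := (Finset.Ioc ⌊M⌋₊ N).filter Nat.Prime |>.biUnion fun p =>
    T.filter fun z => (p : ℤ) ∣ eval z.1 R ∧ z.2 ∈ V p z.1
  let zero : Finset ((Fin m → ℤ) × ℤ) := T.filter fun z => eval z.1 R = 0
  let large : Finset ((Fin m → ℤ) × ℤ) := T.filter fun z => eval z.1 R ≠ 0 ∧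
    ∃ p : ℕ, p.Prime ∧ M < p ∧ N < p ∧ (p : ℤ) ∣ eval z.1 R ∧ z.2 ∈ V p z.1
  have hcover : T ⊆ small ∪ zero ∪ large := by
    intro z hz
    obtain ⟨-, hz2, p, hp, hMp, hpR, hpf⟩ := hT z hz
    have hzV : z.2 ∈ V p z.1 := Finset.mem_filter.2 ⟨hz2, hpf⟩
    by_cases h0 : eval z.1 R = 0
    · exact Finset.mem_union_left _ (Finset.mem_union_right _ (Finset.mem_filter.2 ⟨hz, h0⟩))
    rcases le_or_gt p N with hpN | hpN
    · refine Finset.mem_union_left _ (Finset.mem_union_left _ (Finset.mem_biUnion.2 ⟨p, ?_, ?_⟩))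
      · exact Finset.mem_filter.2
          ⟨Finset.mem_Ioc.2 ⟨(Nat.floor_lt (by linarith)).2 hMp, hpN⟩, hp⟩
      · exact Finset.mem_filter.2 ⟨hz, hpR, hzV⟩
    · exact Finset.mem_union_right _ (Finset.mem_filter.2 ⟨hz, h0, p, hp, hMp, hpN, hpR, hzV⟩)
  have hsmall : (small.card : ℝ) ≤
      D * DR * 4 ^ (m + 1) * (4 * Real.log 4) * ((N : ℝ) ^ (m + 1) / (M * Real.log M)) := by
    have hterm : ∀ p ∈ (Finset.Ioc ⌊M⌋₊ N).filter Nat.Prime,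
        ((T.filter fun z => (p : ℤ) ∣ eval z.1 R ∧ z.2 ∈ V p z.1).card : ℝ) ≤
          D * DR * 4 ^ (m + 1) * (N : ℝ) ^ (m + 1) * (1 / (p : ℝ) ^ 2) := by
      intro p hp
      simp only [Finset.mem_filter, Finset.mem_Ioc] at hp
      obtain ⟨⟨hMp, hpN⟩, hp⟩ := hp
      have hMp : M < p := (Nat.floor_lt (by linarith)).1 hMp
      have hp0 : (0 : ℝ) < p := by exact_mod_cast hp.pos
      have hK : (((2 * N + 1) / p + 1 : ℕ) : ℝ) ≤ 4 * N / p := by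
        have h1 : (((2 * N + 1) / p : ℕ) : ℝ) ≤ ((2 * N + 1 : ℕ) : ℝ) / p := Nat.cast_div_le
        have h2 : (1 : ℝ) ≤ N / p := by
          rw [one_le_div hp0]
          exact_mod_cast hpN
        have h3 : ((2 * N + 1 : ℕ) : ℝ) / p ≤ 3 * N / p := by
          gcongr
          exact_mod_cast (by omega : 2 * N + 1 ≤ 3 * N)
        have h4 : (4 * N / p : ℝ) = 3 * N / p + N / p := by ring
        push_cast at h1 ⊢
        push_cast at h3
        linarith
      have hcard : (T.filter fun z => (p : ℤ) ∣ eval z.1 R ∧ z.2 ∈ V p z.1).card ≤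
          (((2 * N + 1) / p + 1) * D) * (((2 * N + 1) / p + 1) ^ m * (DR * p ^ (m - 1))) := by
        refine (card_le_mul_card_of_fibers (V p)
          (W := (cube m N).filter fun y => (p : ℤ) ∣ eval y R) (fun z hz => ?_)
          fun y _ => hV p hp hMp y).trans
          (Nat.mul_le_mul_left _ (card_cube_filter_dvd_le hm hp (hRp p hMp) N))
        obtain ⟨hz, hz1, hz2⟩ := Finset.mem_filter.1 hz
        exact ⟨Finset.mem_filter.2 ⟨(hT z hz).1, hz1⟩, hz2⟩
      calc ((T.filter fun z => (p : ℤ) ∣ eval z.1 R ∧ z.2 ∈ V p z.1).card : ℝ)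
          ≤ (((2 * N + 1) / p + 1 : ℕ) * D) *
              (((2 * N + 1) / p + 1 : ℕ) ^ m * (DR * (p : ℝ) ^ (m - 1))) := by
            exact_mod_cast hcard
        _ ≤ (4 * N / p * D) * ((4 * N / p) ^ m * (DR * (p : ℝ) ^ (m - 1))) := by gcongr
        _ = D * DR * 4 ^ (m + 1) * (N : ℝ) ^ (m + 1) * (1 / (p : ℝ) ^ 2) := by
            obtain ⟨k, rfl⟩ := Nat.exists_eq_succ_of_ne_zero hm.ne'
            simp only [Nat.succ_eq_add_one, Nat.add_sub_cancel, div_pow, mul_pow]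
            field_simp
            ring
    calc (small.card : ℝ)
        ≤ ∑ p ∈ (Finset.Ioc ⌊M⌋₊ N).filter Nat.Prime,
            ((T.filter fun z => (p : ℤ) ∣ eval z.1 R ∧ z.2 ∈ V p z.1).card : ℝ) := by
          exact_mod_cast Finset.card_biUnion_le
      _ ≤ ∑ p ∈ (Finset.Ioc ⌊M⌋₊ N).filter Nat.Prime,
            D * DR * 4 ^ (m + 1) * (N : ℝ) ^ (m + 1) * (1 / (p : ℝ) ^ 2) :=
          Finset.sum_le_sum hterm
      _ ≤ D * DR * 4 ^ (m + 1) * (N : ℝ) ^ (m + 1) * (4 * Real.log 4 / (M * Real.log M)) := by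
          rw [← Finset.mul_sum]
          gcongr
          exact sum_primes_inv_sq_le hM1 N
      _ = _ := by ring
  have hpow : ((2 * N + 1 : ℕ) : ℝ) ^ m ≤ 3 ^ m * (N : ℝ) ^ m := by
    rw [← mul_pow]
    gcongr
    exact_mod_cast (by omega : 2 * N + 1 ≤ 3 * N)
  have hzero : (zero.card : ℝ) ≤ DR * (3 ^ m * (N : ℝ) ^ m) := by
    have hcard : zero.card ≤ (2 * N + 1) * (DR * (2 * N + 1) ^ (m - 1)) := by
      refine (card_le_mul_card_of_fibers (fun _ => I)
        (W := (cube m N).filter fun y => eval y R = 0) (fun z hz => ?_)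
        fun y _ => (card_Icc_neg N).le).trans (Nat.mul_le_mul_left _ ?_)
      · obtain ⟨hz, hz1⟩ := Finset.mem_filter.1 hz
        exact ⟨Finset.mem_filter.2 ⟨(hT z hz).1, hz1⟩, (hT z hz).2.1⟩
      · rw [← card_Icc_neg N]
        exact card_zeros_piFinset_le hm hR _
    have heq : (2 * N + 1) * (DR * (2 * N + 1) ^ (m - 1)) = DR * (2 * N + 1) ^ m := by
      rw [mul_left_comm, mul_pow_sub_one hm.ne']
    rw [heq] at hcard
    calc (zero.card : ℝ) ≤ DR * ((2 * N + 1 : ℕ) : ℝ) ^ m := by exact_mod_cast hcard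
      _ ≤ _ := by gcongr
  have hlarge : (large.card : ℝ) ≤ 2 * e * D * (3 ^ m * (N : ℝ) ^ m) := by
    let P : (Fin m → ℤ) → Finset ℕ := fun y =>
      ((eval y R).natAbs.primeFactors.filter (N < ·)).filter fun p => M < (p : ℝ)
    have hcard : large.card ≤ (e * (2 * D)) * ((cube m N).filter fun y => eval y R ≠ 0).card := by
      refine card_le_mul_card_of_fibers (fun y => (P y).biUnion fun p => V p y)
        (fun z hz => ?_) fun y hy => ?_
      · obtain ⟨hz, h0, p, hp, hMp, hNp, hpR, hpV⟩ := Finset.mem_filter.1 hz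
        refine ⟨Finset.mem_filter.2 ⟨(hT z hz).1, h0⟩, Finset.mem_biUnion.2 ⟨p, ?_, hpV⟩⟩
        refine Finset.mem_filter.2 ⟨Finset.mem_filter.2 ⟨?_, hNp⟩, hMp⟩
        exact Nat.mem_primeFactors.2
          ⟨hp, Int.natCast_dvd.1 hpR, Int.natAbs_ne_zero.2 h0⟩
      · obtain ⟨hy, h0⟩ := Finset.mem_filter.1 hy
        refine (Finset.card_biUnion_le_card_mul _ _ (2 * D) fun p hp => ?_).trans
          (Nat.mul_le_mul_right _ ((Finset.card_filter_le _ _).trans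
            (card_primeFactors_filter_lt_le hN h0 (he N hN y hy))))
        obtain ⟨hp, hMp⟩ := Finset.mem_filter.1 hp
        obtain ⟨hp, hNp⟩ := Finset.mem_filter.1 hp
        have hp := Nat.prime_of_mem_primeFactors hp
        refine (hV p hp hMp y).trans (Nat.mul_le_mul_right _ ?_)
        have : (2 * N + 1) / p < 2 := (Nat.div_lt_iff_lt_mul hp.pos).2 (by omega)
        omega
    have hcube : ((cube m N).filter fun y => eval y R ≠ 0).card ≤ (2 * N + 1) ^ m :=
      (Finset.card_filter_le _ _).trans (card_cube m N).le
    calc (large.card : ℝ) ≤ (e * (2 * D)) * ((2 * N + 1 : ℕ) : ℝ) ^ m := by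
          exact_mod_cast hcard.trans (Nat.mul_le_mul_left _ hcube)
      _ ≤ (e * (2 * D)) * (3 ^ m * (N : ℝ) ^ m) := by gcongr
      _ = _ := by ring
  have hsum : (T.card : ℝ) ≤ small.card + zero.card + large.card := by
    have h1 := Finset.card_le_card hcover
    have h2 := Finset.card_union_le (small ∪ zero) large
    have h3 := Finset.card_union_le small zero
    exact_mod_cast (by omega : T.card ≤ small.card + zero.card + large.card)
  set X : ℝ := (N : ℝ) ^ (m + 1) / (M * Real.log M) with hX
  set Y : ℝ := (N : ℝ) ^ m with hY
  set c₁ : ℝ := D * DR * 4 ^ (m + 1) * (4 * Real.log 4) with hc₁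
  have hX0 : 0 ≤ X := by positivity
  have hY0 : 0 ≤ Y := by positivity
  have hc₁0 : 0 ≤ c₁ := by positivity
  have hc₂0 : 0 ≤ ((DR : ℝ) + 2 * e * D) * 3 ^ m := by positivity
  calc (T.card : ℝ) ≤ c₁ * X + DR * (3 ^ m * Y) + 2 * e * D * (3 ^ m * Y) := by linarith
    _ = c₁ * X + (DR + 2 * e * D) * 3 ^ m * Y := by ring
    _ ≤ (c₁ + (DR + 2 * e * D) * 3 ^ m + 1) * (X + Y) := by
        nlinarith [mul_nonneg hc₁0 hY0, mul_nonneg hc₂0 hX0]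

/-! ### A change of variables and elimination of the distinguished variable -/

/-- The isomorphism `R[x₀, …, xₘ] ≃ R[y₁, …, yₘ][t]` with `x₀ = t` and `xᵢ = yᵢ + cᵢ t`. -/
def shear {R : Type*} [CommRing R] {m : ℕ} (c : Fin m → R) :
    MvPolynomial (Fin (m + 1)) R ≃+* Polynomial (MvPolynomial (Fin m) R) :=
  RingEquiv.ofRingHom
    (eval₂Hom (Polynomial.C.comp C) (Fin.cons Polynomial.X fun i =>
      Polynomial.C (X i) + Polynomial.C (C (c i)) * Polynomial.X))
    (Polynomial.eval₂RingHom (eval₂Hom C fun i => X i.succ - C (c i) * X 0) (X 0))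
    (by
      ext i
      · simp
      · simp
      · simp)
    (by
      ext i
      · simp
      · refine Fin.cases ?_ (fun i => ?_) i <;> simp)

section shear

variable {R S : Type*} [CommRing R] [CommRing S] {m : ℕ} (c : Fin m → R)

@[simp] lemma shear_C (r : R) : shear c (C r) = Polynomial.C (C r) := by simp [shear]

@[simp] lemma shear_X_zero : shear c (X 0) = Polynomial.X := by simp [shear]

@[simp] lemma shear_X_succ (i : Fin m) :
    shear c (X i.succ) = Polynomial.C (X i) + Polynomial.C (C (c i)) * Polynomial.X := by
  simp [shear]

lemma map_shear (φ : R →+* S) (F : MvPolynomial (Fin (m + 1)) R) :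
    (shear c F).map (map φ) = shear (φ ∘ c) (F.map φ) := by
  induction F using MvPolynomial.induction_on with
  | C r => simp
  | add p q hp hq => simp [hp, hq]
  | mul_X p i hp =>
    rw [map_mul, Polynomial.map_mul, hp, map_mul, map_mul, map_X]
    congr 1
    refine Fin.cases ?_ (fun i => ?_) i <;> simp

lemma eval_shear (F : MvPolynomial (Fin (m + 1)) R) (y : Fin m → R) (t : R) :
    ((shear c F).map (eval y)).eval t = eval (Fin.cons t fun i => y i + c i * t) F := by
  induction F using MvPolynomial.induction_on with
  | C r => simp
  | add p q hp hq => simp [hp, hq]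
  | mul_X p i hp =>
    rw [map_mul, Polynomial.map_mul, Polynomial.eval_mul, hp, map_mul, eval_X]
    congr 1
    refine Fin.cases ?_ (fun i => ?_) i <;> simp

lemma derivative_shear (F : MvPolynomial (Fin (m + 1)) R) :
    (shear c F).derivative =
      shear c (pderiv 0 F) + ∑ i, Polynomial.C (C (c i)) * shear c (pderiv i.succ F) := by
  induction F using MvPolynomial.induction_on with
  | C r => simp
  | add p q hp hq =>
    simp only [map_add, hp, hq, mul_add, Finset.sum_add_distrib]
    ring
  | mul_X p i hp =>
    rw [map_mul, Polynomial.derivative_mul, hp]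
    simp only [Derivation.leibniz, smul_eq_mul, map_add, map_mul, mul_add, Finset.sum_add_distrib,
      add_mul, Finset.sum_mul]
    have h : (shear c (X i)).derivative =
        shear c (pderiv 0 (X i)) + ∑ j, Polynomial.C (C (c j)) * shear c (pderiv j.succ (X i)) := by
      refine Fin.cases ?_ (fun i => ?_) i
      · simp
      · simp [pderiv_X, Pi.single_apply]
    rw [h, mul_add, Finset.mul_sum]
    simp only [mul_comm, mul_left_comm]
    ring

lemma shear_linForm (l : Fin (m + 1) → R) :
    shear c (linForm l) = Polynomial.C (∑ i, C (l i.succ) * X i) +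
      Polynomial.C (C (l 0 + ∑ i, l i.succ * c i)) * Polynomial.X := by
  simp only [linForm, Fin.sum_univ_succ, map_add, map_mul, map_sum, shear_C, shear_X_zero,
    shear_X_succ, mul_add, Finset.sum_add_distrib, add_mul, Finset.sum_mul, mul_assoc]
  ring

end shear

/-- A direction along which a decomposable form does not vanish. -/
lemma exists_direction {m d : ℕ} {L : Fin d → Fin (m + 1) → ℂ} (hL : ∀ j, L j ≠ 0) :
    ∃ c : Fin m → ℤ, ∀ j, L j 0 + ∑ i, L j i.succ * (c i : ℂ) ≠ 0 := by
  let P : Fin d → Polynomial ℂ := fun j => ∑ i, Polynomial.C (L j i) * Polynomial.X ^ (i : ℕ)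
  have hP : ∀ j, P j ≠ 0 := by
    intro j h
    refine hL j (funext fun i => ?_)
    have hcoeff := congrArg (fun q => Polynomial.coeff q (i : ℕ)) h
    simpa [P, Polynomial.finsetSum_coeff, Polynomial.coeff_X_pow, Fin.val_inj] using hcoeff
  have hprod : (∏ j, P j) ≠ 0 := Finset.prod_ne_zero_iff.2 fun j _ => hP j
  obtain ⟨s, hs⟩ : ∃ s : ℕ, (∏ j, P j).eval (s : ℂ) ≠ 0 := by
    by_contra! h
    refine hprod (Polynomial.eq_zero_of_infinite_isRoot _
      (Set.infinite_of_injective_forall_mem (f := fun s : ℕ => (s : ℂ)) Nat.cast_injective h))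
  refine ⟨fun i => (s : ℤ) ^ ((i : ℕ) + 1), fun j hj => hs ?_⟩
  rw [Polynomial.eval_prod]
  refine Finset.prod_eq_zero (Finset.mem_univ j) ?_
  simpa [P, Polynomial.eval_finsetSum, Fin.sum_univ_succ] using hj

lemma resultant_derivative_ne_zero {m : ℕ} {f : Polynomial (MvPolynomial (Fin m) ℤ)}
    (hf : Irreducible (f.map (map (Int.castRingHom ℚ)))) (hdeg : f.natDegree ≠ 0) :
    f.resultant f.derivative ≠ 0 := by
  have hinj : Function.Injective (map (σ := Fin m) (Int.castRingHom ℚ)) :=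
    map_injective _ Int.cast_injective
  let K := FractionRing (MvPolynomial (Fin m) ℚ)
  set ι := algebraMap (MvPolynomial (Fin m) ℚ) K with hι
  have hιinj : Function.Injective ι := IsFractionRing.injective _ _
  have : CharZero K := charZero_of_injective_algebraMap hιinj
  have hdeg' : (f.map (map (Int.castRingHom ℚ))).natDegree ≠ 0 := by
    rwa [Polynomial.natDegree_map_eq_of_injective hinj]
  have hirr : Irreducible ((f.map (map (Int.castRingHom ℚ))).map ι) :=
    ((hf.isPrimitive hdeg').irreducible_iff_irreducible_map_fraction_map).1 hf
  have hsep := hirr.separable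
  intro h0
  refine Polynomial.resultant_ne_zero _ _ hsep ?_
  rw [Polynomial.derivative_map, Polynomial.derivative_map, Polynomial.resultant_map_map,
    Polynomial.resultant_map_map, Polynomial.natDegree_map_eq_of_injective hιinj,
    Polynomial.natDegree_map_eq_of_injective hinj, Polynomial.natDegree_map_eq_of_injective hιinj,
    Polynomial.natDegree_map_eq_of_injective hinj, h0, map_zero, map_zero]

lemma dvd_eval_resultant_derivative {m : ℕ} {f : Polynomial (MvPolynomial (Fin m) ℤ)}
    (hdeg : f.natDegree ≠ 0) {p : ℤ} {y : Fin m → ℤ} {t : ℤ}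
    (h₁ : p ∣ (f.map (eval y)).eval t) (h₂ : p ∣ (f.derivative.map (eval y)).eval t) :
    p ∣ eval y (f.resultant f.derivative) := by
  obtain ⟨u, v, -, -, huv⟩ := Polynomial.exists_mul_add_mul_eq_C_resultant f f.derivative
    le_rfl le_rfl (Or.inl hdeg)
  have h := congrArg (fun q => (Polynomial.map (eval y) q).eval t) huv
  simp only [Polynomial.map_add, Polynomial.map_mul, Polynomial.eval_add, Polynomial.eval_mul,
    Polynomial.map_C, Polynomial.eval_C] at h
  rw [← h]
  exact dvd_add (h₁.mul_right _) (h₂.mul_right _)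

/-- The leading coefficient of a sheared decomposable form. -/
lemma IsDecomp.shear_leadingCoeff {m d : ℕ} {F : MvPolynomial (Fin (m + 1)) ℤ}
    {L : Fin d → Fin (m + 1) → ℂ} (hF : IsDecomp F L) {c : Fin m → ℤ}
    (hc : ∀ j, L j 0 + ∑ i, L j i.succ * (c i : ℂ) ≠ 0) :
    (shear c F).natDegree = d ∧ ∃ a : ℤ, a ≠ 0 ∧ (shear c F).leadingCoeff = C a := by
  have hinj : Function.Injective (map (σ := Fin m) (Int.castRingHom ℂ)) :=
    map_injective _ Int.cast_injective
  set b : Fin d → ℂ := fun j => L j 0 + ∑ i, L j i.succ * (c i : ℂ) with hb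
  have hfac : (shear c F).map (map (Int.castRingHom ℂ)) = ∏ j, (Polynomial.C (C (b j)) *
      Polynomial.X + Polynomial.C (∑ i, C (L j i.succ) * X i)) := by
    rw [map_shear, hF.2, map_prod]
    refine Finset.prod_congr rfl fun j _ => ?_
    rw [shear_linForm, add_comm]
    rfl
  have hbC : ∀ j, (C (b j) : MvPolynomial (Fin m) ℂ) ≠ 0 := fun j => by
    simpa using hc j
  have hdegree : (shear c F).natDegree = d := by
    rw [← Polynomial.natDegree_map_eq_of_injective hinj, hfac, Polynomial.natDegree_prod]
    · rw [Finset.sum_congr rfl fun j _ => Polynomial.natDegree_linear (hbC j)]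
      simp
    · intro j _ h
      have h1 := Polynomial.natDegree_linear (b := ∑ i, C (L j i.succ) * X i) (hbC j)
      rw [h, Polynomial.natDegree_zero] at h1
      exact zero_ne_one h1
  have hlead : map (Int.castRingHom ℂ) (shear c F).leadingCoeff = C (∏ j, b j) := by
    rw [← Polynomial.leadingCoeff_map_of_injective hinj, hfac, Polynomial.leadingCoeff_prod,
      map_prod]
    exact Finset.prod_congr rfl fun j _ => Polynomial.leadingCoeff_linear (hbC j)
  have heval : ((eval (Fin.cons 1 c) F : ℤ) : ℂ) = ∏ j, b j := by
    have h1 : ((eval (Fin.cons 1 c) F : ℤ) : ℂ) =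
        eval (fun i => ((Fin.cons 1 c : Fin (m + 1) → ℤ) i : ℂ)) (F.map (Int.castRingHom ℂ)) := by
      rw [eval_map, ← eq_intCast (Int.castRingHom ℂ), eval₂_comp]
      rfl
    rw [h1, hF.2, map_prod]
    refine Finset.prod_congr rfl fun j _ => ?_
    simp [eval_linForm, Fin.sum_univ_succ, hb]
  refine ⟨hdegree, eval (Fin.cons 1 c) F, fun h0 => ?_, hinj ?_⟩
  · rw [h0, Int.cast_zero] at heval
    exact Finset.prod_ne_zero_iff.2 (fun j _ => hc j) heval.symm
  · rw [hlead, map_C, eq_intCast, heval]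

lemma IsDecomp.linForm_ne_zero {n d : ℕ} {F : MvPolynomial (Fin n) ℤ} {L : Fin d → Fin n → ℂ}
    (hF : IsDecomp F L) (hF0 : F ≠ 0) (j : Fin d) : L j ≠ 0 := by
  intro h
  refine hF0 (map_injective (Int.castRingHom ℂ) Int.cast_injective ?_)
  rw [hF.2, map_zero]
  exact Finset.prod_eq_zero (Finset.mem_univ j) (by simp [h, linForm])

theorem stmt9 (n d : ℕ) (hn : 2 ≤ n) (hd : n < d)
    (F : MvPolynomial (Fin n) ℤ) (L : Fin d → Fin n → ℂ)
    (hF : IsDecomp F L) (hirr : Irreducible (F.map (Int.castRingHom ℚ)))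
    (hΔ : discProd L ≠ 0)
    (ξ₁ : ℝ → ℝ) (hξ : Xi1Good ξ₁)
    (τ : ∀ p : ℕ, p.Prime → ℕ)
    (𝓛 : ∀ (p : ℕ) (hp : p.Prime), Fin (τ p hp) → Fin n → @PadicInt p ⟨hp⟩)
    (Fstar : ∀ (p : ℕ) (hp : p.Prime), MvPolynomial (Fin n) (@PadicInt p ⟨hp⟩))
    (hfact : ∀ (p : ℕ) (hp : p.Prime), IsPadicFact F p hp (𝓛 p hp) (Fstar p hp)) :
    ∃ C : ℝ, 0 < C ∧ ∀ᶠ B : ℝ in atTop,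
      (N3starCount 𝓛 Fstar (ξ₁ B) B : ℝ)
        ≤ C * (B ^ n / (ξ₁ B * Real.log (ξ₁ B)) + B ^ (n - 1)) := by
  obtain ⟨m, rfl⟩ : ∃ m, n = m + 1 := ⟨n - 1, by omega⟩
  have hF0 : F ≠ 0 := fun h => hirr.ne_zero (by rw [h, map_zero])
  obtain ⟨c, hc⟩ := exists_direction (hF.linForm_ne_zero hF0)
  obtain ⟨hdeg, a, ha, hlead⟩ := hF.shear_leadingCoeff hc
  have hdeg0 : (shear c F).natDegree ≠ 0 := by omega
  have hR : (shear c F).resultant (shear c F).derivative ≠ 0 := by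
    refine resultant_derivative_ne_zero ?_ hdeg0
    rw [map_shear]
    exact (MulEquiv.irreducible_iff (shear _)).2 hirr
  obtain ⟨A, M₀, hA, hM₀, hsieve⟩ := geometric_sieve (by omega) ha hlead hR
  set K : ℕ := 1 + ∑ i, (c i).natAbs with hK
  have hK1 : (1 : ℝ) ≤ K := by exact_mod_cast (by omega : 1 ≤ K)
  have hcK : ∀ i, |c i| + 1 ≤ (K : ℤ) := by
    intro i
    have := Finset.single_le_sum (f := fun i => (c i).natAbs) (fun _ _ => Nat.zero_le _)
      (Finset.mem_univ i)
    rw [Int.abs_eq_natAbs]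
    omega
  refine ⟨A * (K : ℝ) ^ (m + 1), by positivity, ?_⟩
  filter_upwards [hξ.2.1.eventually_ge_atTop M₀, eventually_ge_atTop 2] with B hξB hB
  have hlog : 0 < Real.log (ξ₁ B) := Real.log_pos (by linarith)
  have hξ0 : 0 < ξ₁ B := by linarith
  set b : ℕ := ⌊B⌋₊ with hb
  have hb2 : 2 ≤ b := Nat.le_floor (by exact_mod_cast hB)
  have hbB : (b : ℝ) ≤ B := Nat.floor_le (by linarith)
  set S : Set (Fin (m + 1) → ℤ) := {x | (∀ i, |(x i : ℝ)| ≤ B) ∧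
    ∃ (p : ℕ) (hp : p.Prime), ξ₁ B < (p : ℝ) ∧
      Sp p hp (𝓛 p hp) (Fstar p hp) (fun i => ((x i : ZMod p)))} with hS
  let g : (Fin (m + 1) → ℤ) → (Fin m → ℤ) × ℤ := fun x => (fun i => x i.succ - c i * x 0, x 0)
  have hsection : ∀ x, (Fin.cons (g x).2 fun i => (g x).1 i + c i * (g x).2) = x := by
    intro x
    funext i
    refine Fin.cases ?_ (fun i => ?_) i <;> simp [g]
  have hg : Function.Injective g := by
    intro x x' h
    rw [← hsection x, ← hsection x', h]
  have hbox : ∀ x ∈ S, (g x).1 ∈ cube m (K * b) ∧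
      (g x).2 ∈ Finset.Icc (-((K * b : ℕ) : ℤ)) ((K * b : ℕ) : ℤ) := by
    intro x hx
    have hx' : ∀ i, |x i| ≤ (b : ℤ) := by
      intro i
      have h1 : ((x i).natAbs : ℝ) ≤ B := by
        rw [Nat.cast_natAbs, Int.cast_abs]
        exact hx.1 i
      rw [Int.abs_eq_natAbs]
      exact_mod_cast Nat.le_floor h1
    have hKb : (b : ℤ) ≤ (K * b : ℕ) := by
      exact_mod_cast Nat.le_mul_of_pos_left b (by omega)
    refine ⟨mem_cube.2 fun i => ?_, ?_⟩
    · calc |x i.succ - c i * x 0| ≤ |x i.succ| + |c i * x 0| := abs_sub _ _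
        _ ≤ b + |c i| * b := by
            rw [abs_mul]
            exact add_le_add (hx' _) (mul_le_mul_of_nonneg_left (hx' _) (abs_nonneg _))
        _ = (|c i| + 1) * b := by ring
        _ ≤ K * b := mul_le_mul_of_nonneg_right (hcK i) (by positivity)
        _ = (K * b : ℕ) := by push_cast; rfl
    · exact Finset.mem_Icc.2 (abs_le.1 ((hx' 0).trans hKb))
  have hfin : (g '' S).Finite := by
    refine (cube m (K * b) ×ˢ
      Finset.Icc (-((K * b : ℕ) : ℤ)) ((K * b : ℕ) : ℤ)).finite_toSet.subset ?_
    rintro _ ⟨x, hx, rfl⟩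
    exact Finset.mem_coe.2 (Finset.mem_product.2 (hbox x hx))
  have hcount : N3starCount 𝓛 Fstar (ξ₁ B) B = hfin.toFinset.card := by
    rw [← Set.ncard_eq_toFinset_card _ hfin, Set.ncard_image_of_injective _ hg]
    rfl
  have hT := hsieve (ξ₁ B) hξB (K * b) (hb2.trans (Nat.le_mul_of_pos_left b (by omega)))
    hfin.toFinset (by
      intro z hz
      obtain ⟨x, hx, rfl⟩ := hfin.mem_toFinset.1 hz
      refine ⟨(hbox x hx).1, (hbox x hx).2, ?_⟩
      obtain ⟨p, hp, hξp, hSp⟩ := hx.2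
      obtain ⟨hpF, hpdF⟩ := Sp.dvd hF (hfact p hp) hSp
      have h₁ : (p : ℤ) ∣ ((shear c F).map (eval (g x).1)).eval (g x).2 := by
        rwa [eval_shear, hsection]
      refine ⟨p, hp, hξp, dvd_eval_resultant_derivative hdeg0 h₁ ?_, h₁⟩
      rw [derivative_shear]
      simp only [Polynomial.map_add, Polynomial.eval_add, Polynomial.map_sum, Polynomial.map_mul,
        Polynomial.eval_finsetSum, Polynomial.eval_mul, eval_shear, hsection]
      exact dvd_add (hpdF 0) (Finset.dvd_sum fun i _ => (hpdF i.succ).mul_left _))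
  rw [hcount]
  refine hT.trans ?_
  have hKb : ((K * b : ℕ) : ℝ) ≤ K * B := by
    push_cast
    gcongr
  have hpow : ((K * b : ℕ) : ℝ) ^ (m + 1) ≤ (K : ℝ) ^ (m + 1) * B ^ (m + 1) := by
    rw [← mul_pow]
    gcongr
  have hpow' : ((K * b : ℕ) : ℝ) ^ m ≤ (K : ℝ) ^ (m + 1) * B ^ m := by
    calc ((K * b : ℕ) : ℝ) ^ m ≤ (K * B) ^ m := by gcongr
      _ = (K : ℝ) ^ m * B ^ m := mul_pow _ _ _
      _ ≤ (K : ℝ) ^ (m + 1) * B ^ m := by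
          gcongr
          omega
  calc A * (((K * b : ℕ) : ℝ) ^ (m + 1) / (ξ₁ B * Real.log (ξ₁ B)) + ((K * b : ℕ) : ℝ) ^ m)
      ≤ A * ((K : ℝ) ^ (m + 1) * B ^ (m + 1) / (ξ₁ B * Real.log (ξ₁ B)) +
          (K : ℝ) ^ (m + 1) * B ^ m) := by gcongr
    _ = A * (K : ℝ) ^ (m + 1) *
          (B ^ (m + 1) / (ξ₁ B * Real.log (ξ₁ B)) + B ^ (m + 1 - 1)) := by
        rw [Nat.add_sub_cancel]
        ring

end
end
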